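/- Let ν ≥ 1, let N ⊆ ℝ^ν be a compact connected smooth embedded submanifold without boundary with base point b ∈ N, let m ≥ 2, let p be a real number, and let ℓ ∈ {1, …, m−1} satisfy ℓ < p − 1. Assume that the homotopy group π_ℓ(N, b) is infinite. Then there exists a sequence (u_j) of smooth maps u_j : B̄^{m−1} → N with u_j = b on the sphere S^{m−2}, such that liminf_{j→∞} E^{1−1/p, p}_{B^{m−1}}(u_j) > 0 and such that for every M > 0 there is J with E^{1,p}_ext(u_j) ≥ M · E^{1−1/p, p}_{B^{m−1}}(u_j) for all j ≥ J. -/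

import Mathlib

open Metric Set MeasureTheory Filter
open scoped ENNReal Topology

noncomputable section

/-- `N ⊆ ℝ^ν` is a smooth embedded submanifold without boundary: around each of its points
there is a smooth local diffeomorphism of the ambient space flattening `N` onto a
`d`-dimensional coordinate subspace. -/
def IsSmoothSubmanifold {ν : ℕ} (N : Set (EuclideanSpace ℝ (Fin ν))) : Prop :=
  ∃ d : ℕ, ∀ x ∈ N, ∃ (U V : Set (EuclideanSpace ℝ (Fin ν)))
      (φ ψ : EuclideanSpace ℝ (Fin ν) → EuclideanSpace ℝ (Fin ν)),
    IsOpen U ∧ IsOpen V ∧ x ∈ U ∧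
    ContDiffOn ℝ (⊤ : ℕ∞) φ U ∧ ContDiffOn ℝ (⊤ : ℕ∞) ψ V ∧
    MapsTo φ U V ∧ MapsTo ψ V U ∧
    (∀ y ∈ U, ψ (φ y) = y) ∧ (∀ z ∈ V, φ (ψ z) = z) ∧
    (∀ y ∈ U, (y ∈ N ↔ ∀ i : Fin ν, d ≤ (i : ℕ) → φ y i = 0))

/-- The Gagliardo fractional energy `E^{s,p}_A(u)`. -/
def gagliardoE {l ν : ℕ} (s p : ℝ) (A : Set (EuclideanSpace ℝ (Fin l)))
    (u : EuclideanSpace ℝ (Fin l) → EuclideanSpace ℝ (Fin ν)) : ℝ≥0∞ :=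
  ∫⁻ x in A, ∫⁻ y in A, ENNReal.ofReal (‖u y - u x‖ ^ p / ‖y - x‖ ^ ((l : ℝ) + s * p))

/-- `f` is `C^1` on the closed set `A` in the sense that it is (the restriction of)
a `C^1` map on an open neighborhood of `A`. -/
def C1OnNhd {E F : Type*} [NormedAddCommGroup E] [NormedSpace ℝ E]
    [NormedAddCommGroup F] [NormedSpace ℝ F] (f : E → F) (A : Set E) : Prop :=
  ∃ V : Set E, IsOpen V ∧ A ⊆ V ∧ ContDiffOn ℝ 1 f V

/-- `f` is `C^∞` on the closed set `A` in the sense that it is (the restriction of)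
a smooth map on an open neighborhood of `A`. -/
def SmoothOnNhd {E F : Type*} [NormedAddCommGroup E] [NormedSpace ℝ E]
    [NormedAddCommGroup F] [NormedSpace ℝ F] (f : E → F) (A : Set E) : Prop :=
  ∃ V : Set E, IsOpen V ∧ A ⊆ V ∧ ContDiffOn ℝ (⊤ : ℕ∞) f V

/-- The `C^1` extension `p`-energy `E^{1,p}_ext(u)` of a map `u : B̄^l → N`:
the infimum (in `ℝ≥0∞`, so `sInf ∅ = ∞`) of `∫_{B^l × (0,1)} ‖DU‖^p` over all `C^1` maps
`U : B̄^l × [0,1] → N` with `U(·,0) = u`. -/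
def extEnergy {l ν : ℕ} (p : ℝ) (N : Set (EuclideanSpace ℝ (Fin ν)))
    (u : EuclideanSpace ℝ (Fin l) → EuclideanSpace ℝ (Fin ν)) : ℝ≥0∞ :=
  sInf { e | ∃ U : EuclideanSpace ℝ (Fin l) × ℝ → EuclideanSpace ℝ (Fin ν),
    C1OnNhd U (closedBall 0 1 ×ˢ Icc (0 : ℝ) 1) ∧
    MapsTo U (closedBall 0 1 ×ˢ Icc (0 : ℝ) 1) N ∧
    (∀ x ∈ closedBall (0 : EuclideanSpace ℝ (Fin l)) 1, U (x, 0) = u x) ∧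
    e = ∫⁻ z in ball (0 : EuclideanSpace ℝ (Fin l)) 1 ×ˢ Ioo (0 : ℝ) 1,
          ENNReal.ofReal (‖fderiv ℝ U z‖ ^ p) }

/-- `f` and `g`, mapping `B̄^l` into `N` and agreeing on `S^{l-1}`, are homotopic within `N`
relative to the sphere `S^{l-1}`. -/
def HomotopicRelSphere {l ν : ℕ} (N : Set (EuclideanSpace ℝ (Fin ν)))
    (f g : EuclideanSpace ℝ (Fin l) → EuclideanSpace ℝ (Fin ν)) : Prop :=
  ∃ H : EuclideanSpace ℝ (Fin l) × ℝ → EuclideanSpace ℝ (Fin ν),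
    ContinuousOn H (closedBall 0 1 ×ˢ Icc (0 : ℝ) 1) ∧
    MapsTo H (closedBall 0 1 ×ˢ Icc (0 : ℝ) 1) N ∧
    (∀ x ∈ closedBall (0 : EuclideanSpace ℝ (Fin l)) 1, H (x, 0) = f x ∧ H (x, 1) = g x) ∧
    (∀ x ∈ sphere (0 : EuclideanSpace ℝ (Fin l)) 1, ∀ t ∈ Icc (0 : ℝ) 1, H (x, t) = f x)

/-- The topological `p`-energy `E^{1,p}_top(u)` of `u : B̄^l → N` with `u = b` on `S^{l-1}`:
the infimum (in `ℝ≥0∞`) of `∫_{B^l} ‖Dw‖^p` over all `C^1` maps `w : B̄^l → N` with `w = b` on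
`S^{l-1}` that are homotopic to `u` relative to `S^{l-1}`. -/
def topEnergy {l ν : ℕ} (p : ℝ) (N : Set (EuclideanSpace ℝ (Fin ν)))
    (b : EuclideanSpace ℝ (Fin ν))
    (u : EuclideanSpace ℝ (Fin l) → EuclideanSpace ℝ (Fin ν)) : ℝ≥0∞ :=
  sInf { e | ∃ w : EuclideanSpace ℝ (Fin l) → EuclideanSpace ℝ (Fin ν),
    C1OnNhd w (closedBall 0 1) ∧ MapsTo w (closedBall 0 1) N ∧
    (∀ x ∈ sphere (0 : EuclideanSpace ℝ (Fin l)) 1, w x = b) ∧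
    HomotopicRelSphere N w u ∧
    e = ∫⁻ x in ball (0 : EuclideanSpace ℝ (Fin l)) 1, ENNReal.ofReal (‖fderiv ℝ w x‖ ^ p) }


section
open Metric Set MeasureTheory Filter
open scoped ENNReal Topology

/-- the critical point equation of the distance function in a chart -/
def critG {ν : ℕ} (d : ℕ) (ψ : EuclideanSpace ℝ (Fin ν) → EuclideanSpace ℝ (Fin ν))
    (q : EuclideanSpace ℝ (Fin ν) × EuclideanSpace ℝ (Fin ν)) : EuclideanSpace ℝ (Fin ν) :=
  WithLp.toLp 2 (fun i : Fin ν => if (i : ℕ) < d then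
    inner ℝ (q.1 - ψ q.2) (fderiv ℝ ψ q.2 (EuclideanSpace.single i 1)) else q.2 i)

theorem critG_contDiffAt {ν : ℕ} (d : ℕ) {ψ : EuclideanSpace ℝ (Fin ν) → EuclideanSpace ℝ (Fin ν)}
    {V : Set (EuclideanSpace ℝ (Fin ν))} (hV : IsOpen V) (hψ : ContDiffOn ℝ (⊤ : ℕ∞) ψ V)
    (x z : EuclideanSpace ℝ (Fin ν)) (hz : z ∈ V) : ContDiffAt ℝ (⊤ : ℕ∞) (critG d ψ) (x, z) := by
  have h1 : ContDiffAt ℝ (⊤ : ℕ∞) ψ z := hψ.contDiffAt (hV.mem_nhds hz)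
  have h2 : ContDiffAt ℝ (⊤ : ℕ∞) (fderiv ℝ ψ) z := h1.fderiv_right (by simp)
  have h1' : ContDiffAt ℝ (⊤ : ℕ∞) (fun q : EuclideanSpace ℝ (Fin ν) × EuclideanSpace ℝ (Fin ν) => ψ q.2) (x, z) :=
    ContDiffAt.comp (x, z) (g := ψ) (f := Prod.snd) h1 contDiffAt_snd
  have h2' : ContDiffAt ℝ (⊤ : ℕ∞) (fun q : EuclideanSpace ℝ (Fin ν) × EuclideanSpace ℝ (Fin ν) => fderiv ℝ ψ q.2) (x, z) :=
    ContDiffAt.comp (x, z) (g := fderiv ℝ ψ) (f := Prod.snd) h2 contDiffAt_snd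
  rw [contDiffAt_euclidean]
  intro i
  by_cases hi : (i : ℕ) < d
  · simp only [critG, hi, if_true]
    exact (contDiffAt_fst.sub h1').inner ℝ (h2'.clm_apply contDiffAt_const)
  · simp only [critG, hi, if_false]
    have : ContDiffAt ℝ (⊤ : ℕ∞) (fun q : EuclideanSpace ℝ (Fin ν) × EuclideanSpace ℝ (Fin ν) => q.2) (x, z) := contDiffAt_snd
    exact (contDiffAt_euclidean.1 this) i

theorem critG_inv {ν : ℕ} (d : ℕ) {φ ψ : EuclideanSpace ℝ (Fin ν) → EuclideanSpace ℝ (Fin ν)}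
    {U V : Set (EuclideanSpace ℝ (Fin ν))} (hV : IsOpen V) (hU : IsOpen U)
    (hφ : ContDiffOn ℝ (⊤ : ℕ∞) φ U) (hψ : ContDiffOn ℝ (⊤ : ℕ∞) ψ V) (hm : MapsTo ψ V U)
    (hr : ∀ z ∈ V, φ (ψ z) = z) (z : EuclideanSpace ℝ (Fin ν)) (hz : z ∈ V) :
    (fderiv ℝ (critG d ψ) (ψ z, z) ∘L .inr ℝ _ _).IsInvertible := by
  have h1 : ContDiffAt ℝ (⊤ : ℕ∞) ψ z := hψ.contDiffAt (hV.mem_nhds hz)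
  have hd1 : DifferentiableAt ℝ ψ z := h1.differentiableAt (by simp)
  have h2 : DifferentiableAt ℝ (fderiv ℝ ψ) z :=
    (h1.fderiv_right (m := 1) (by norm_cast)).differentiableAt (by simp)
  have hdφ : DifferentiableAt ℝ φ (ψ z) :=
    (hφ.contDiffAt (hU.mem_nhds (hm hz))).differentiableAt (by simp)
  have hinj0 : ∀ h, fderiv ℝ ψ z h = 0 → h = 0 := by
    intro h hh
    have e1 : fderiv ℝ (fun z => φ (ψ z)) z = ContinuousLinearMap.id ℝ _ := by
      have : (fun z => φ (ψ z)) =ᶠ[𝓝 z] id := by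
        filter_upwards [hV.mem_nhds hz] with w hw using hr w hw
      rw [this.fderiv_eq]; simp
    have e2 := fderiv_comp z hdφ hd1
    have e3 : fderiv ℝ (φ ∘ ψ) z h = h := by
      have : fderiv ℝ (φ ∘ ψ) z = ContinuousLinearMap.id ℝ _ := e1
      rw [this]; rfl
    rw [e2] at e3
    simpa [hh] using e3.symm
  have hG : DifferentiableAt ℝ (critG d ψ) (ψ z, z) :=
    (critG_contDiffAt d hV hψ _ z hz).differentiableAt (by simp)
  have hcomp : ∀ h, (fderiv ℝ (critG d ψ) (ψ z, z) ∘L .inr ℝ _ _) h = WithLp.toLp 2 (fun i : Fin ν =>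
      if (i : ℕ) < d then - inner ℝ (fderiv ℝ ψ z h) (fderiv ℝ ψ z (EuclideanSpace.single i 1)) else h i) := by
    intro h
    have hf : HasFDerivAt (fun w => critG d ψ (ψ z, w)) (fderiv ℝ (critG d ψ) (ψ z, z) ∘L .inr ℝ _ _) z :=
      HasFDerivAt.comp (g := critG d ψ) (f := fun w => (ψ z, w)) z hG.hasFDerivAt
        (hasFDerivAt_prodMk_right _ _)
    ext i
    have hfi : HasFDerivAt (fun w => critG d ψ (ψ z, w) i) _ z :=
      (EuclideanSpace.proj (𝕜 := ℝ) i).hasFDerivAt.comp z hf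
    by_cases hi : (i : ℕ) < d
    · simp only [critG, hi, if_true] at hfi ⊢
      have hk : HasFDerivAt (fun w => inner ℝ (ψ z - ψ w) (fderiv ℝ ψ w (EuclideanSpace.single i 1))) _ z :=
        HasFDerivAt.inner ℝ ((hasFDerivAt_const (ψ z) z).sub hd1.hasFDerivAt)
          (h2.hasFDerivAt.clm_apply (hasFDerivAt_const (EuclideanSpace.single i (1:ℝ)) z))
      have := congrArg (fun L => L h) (hfi.unique hk)
      simp at this
      simpa using this
    · simp only [critG, hi, if_false] at hfi ⊢
      have hk : HasFDerivAt (fun w : EuclideanSpace ℝ (Fin ν) => w i) (EuclideanSpace.proj (𝕜 := ℝ) i : EuclideanSpace ℝ (Fin ν) →L[ℝ] ℝ) z :=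
        (EuclideanSpace.proj (𝕜 := ℝ) i).hasFDerivAt
      have := congrArg (fun L => L h) (hfi.unique hk)
      simpa using this
  have hinj : Function.Injective (fderiv ℝ (critG d ψ) (ψ z, z) ∘L .inr ℝ _ _) := by
    rw [injective_iff_map_eq_zero]
    intro h hh
    rw [hcomp] at hh
    apply hinj0
    rw [← inner_self_eq_zero (𝕜 := ℝ)]
    have hsum : h = ∑ i, h i • EuclideanSpace.single i (1:ℝ) := by
      ext j; simp [Finset.sum_apply, Pi.single_apply]
    have e : fderiv ℝ ψ z h = ∑ i, h i • fderiv ℝ ψ z (EuclideanSpace.single i (1:ℝ)) := by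
      conv_lhs => rw [hsum]
      simp
    have e' : inner ℝ (fderiv ℝ ψ z h) (fderiv ℝ ψ z h) = inner ℝ (fderiv ℝ ψ z h)
      (∑ i, h i • fderiv ℝ ψ z (EuclideanSpace.single i (1:ℝ))) := congrArg _ e
    rw [e', inner_sum]
    apply Finset.sum_eq_zero
    intro i _
    have hi := congrArg (fun v : EuclideanSpace ℝ (Fin ν) => v i) hh
    by_cases hid : (i : ℕ) < d
    · simp [hid] at hi
      rw [inner_smul_right, hi]; simp
    · simp [hid] at hi
      simp [hi]
  let e := LinearEquiv.ofInjectiveEndo (fderiv ℝ (critG d ψ) (ψ z, z) ∘L .inr ℝ _ _).toLinearMap hinj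
  refine ⟨e.toContinuousLinearEquiv, ?_⟩
  ext v; rfl

theorem exists_retraction {ν : ℕ} (N : Set (EuclideanSpace ℝ (Fin ν)))
    (hNcpt : IsCompact N) (hne : N.Nonempty) (hNsub : IsSmoothSubmanifold N) :
    ∃ (P : EuclideanSpace ℝ (Fin ν) → EuclideanSpace ℝ (Fin ν)),
      (∀ x, P x ∈ N) ∧ (∀ x ∈ N, P x = x) ∧
      ∃ δ > 0, ∀ x, infDist x N ≤ δ → ContDiffAt ℝ (⊤ : ℕ∞) P x := by
  have hproj : ∀ x, ∃ y ∈ N, infDist x N = dist x y := fun x => hNcpt.exists_infDist_eq_dist hne x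
  choose P hPN hPd using hproj
  have hPid : ∀ x ∈ N, P x = x := by
    intro x hx
    have := hPd x
    rw [infDist_zero_of_mem hx] at this
    exact (dist_eq_zero.1 this.symm).symm
  have hmin : ∀ x, ∀ y ∈ N, dist x (P x) ≤ dist x y := by
    intro x y hy
    rw [← hPd]; exact infDist_le_dist_of_mem hy
  refine ⟨P, hPN, hPid, ?_⟩
  -- local statement
  have hloc : ∀ y ∈ N, ∀ᶠ x in 𝓝 y, ContDiffAt ℝ (⊤ : ℕ∞) P x := by
    obtain ⟨d, hd⟩ := hNsub
    intro y0 hy0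
    obtain ⟨U, V, φ, ψ, hU, hV, hy0U, hφ, hψ, hφm, hψm, hl, hr, hN⟩ := hd y0 hy0
    set z0 := φ y0 with hz0
    have hz0V : z0 ∈ V := hφm hy0U
    have hψz0 : ψ z0 = y0 := hl y0 hy0U
    have hPc : Tendsto P (𝓝 y0) (𝓝 y0) := by
      rw [Metric.tendsto_nhds_nhds]
      intro ε hε
      refine ⟨ε / 2, by positivity, fun x hx => ?_⟩
      have h1 := hmin x y0 hy0
      have h2 := dist_triangle (P x) x y0
      rw [dist_comm (P x) x] at h2
      linarith
    have hφc : Tendsto φ (𝓝 y0) (𝓝 z0) := (hφ.continuousOn.continuousAt (hU.mem_nhds hy0U))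
    -- critical point equation
    have hcrit : ∀ᶠ x in 𝓝 y0, P x ∈ U ∧ critG d ψ (x, φ (P x)) = 0 := by
      filter_upwards [hPc.eventually (hU.mem_nhds hy0U)] with x hx
      refine ⟨hx, ?_⟩
      set z := φ (P x) with hz
      have hzV : z ∈ V := hφm hx
      have hψz : ψ z = P x := hl _ hx
      have hzS := (hN _ hx).1 (hPN x)
      ext i
      by_cases hi : (i : ℕ) < d
      · simp only [critG, hi, if_true]
        have hdψ : DifferentiableAt ℝ ψ z := (hψ.contDiffAt (hV.mem_nhds hzV)).differentiableAt (by simp)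
        set v := EuclideanSpace.single i (1:ℝ) with hv
        have hline : HasDerivAt (fun s : ℝ => z + s • v) v 0 := by
          simpa using ((hasDerivAt_id (0:ℝ)).smul_const v).const_add z
        have hc : HasDerivAt (fun s : ℝ => ψ (z + s • v)) (fderiv ℝ ψ z v) 0 := by
          have : HasFDerivAt ψ (fderiv ℝ ψ z) (z + (0:ℝ) • v) := by simpa using hdψ.hasFDerivAt
          exact this.comp_hasDerivAt (0:ℝ) hline
        have hq : HasDerivAt (fun s : ℝ => ‖x - ψ (z + s • v)‖ ^ 2) (2 * inner ℝ (x - ψ z) (-fderiv ℝ ψ z v)) 0 := by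
          have := (hc.const_sub x).norm_sq
          simpa using this
        have hlm : IsLocalMin (fun s : ℝ => ‖x - ψ (z + s • v)‖ ^ 2) 0 := by
          have hcont : Tendsto (fun s : ℝ => z + s • v) (𝓝 0) (𝓝 z) := by
            simpa using hline.continuousAt.tendsto
          filter_upwards [hcont.eventually (hV.mem_nhds hzV)] with s hs
          have hmem : ψ (z + s • v) ∈ N := by
            rw [hN _ (hψm hs)]
            intro k hk
            rw [hr _ hs]
            have hki : k ≠ i := by rintro rfl; omega
            simpa [hv, hki] using hzS k hk
          have := hmin x _ hmem
          simp only [zero_smul, add_zero, hψz]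
          rw [dist_eq_norm, dist_eq_norm] at this
          gcongr
        have := hlm.hasDerivAt_eq_zero hq
        rw [inner_neg_right] at this
        simp; linarith
      · simp only [critG, hi, if_false]
        exact hzS i (by omega)
    -- implicit function at points of the chart
    have hG0 : ContDiffAt ℝ (⊤ : ℕ∞) (critG d ψ) (y0, z0) := critG_contDiffAt d hV hψ y0 z0 hz0V
    have hinv0 : (fderiv ℝ (critG d ψ) (y0, z0) ∘L .inr ℝ _ _).IsInvertible := by
      have := critG_inv d hV hU hφ hψ hψm hr z0 hz0V
      rwa [hψz0] at this
    have hGz : critG d ψ (y0, z0) = 0 := by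
      have := hcrit.self_of_nhds.2
      rwa [hPid y0 hy0] at this
    have hn0 : ((⊤ : ℕ∞) : WithTop ℕ∞) ≠ 0 := by simp
    -- uniqueness
    have huniq := hG0.eventually_apply_eq_iff_implicitFunction hn0 hinv0
    rw [hGz] at huniq
    set χ := hG0.implicitFunction hn0 hinv0 with hχ
    have hinvnear : ∀ᶠ q in 𝓝 (y0, z0), (fderiv ℝ (critG d ψ) q ∘L .inr ℝ _ _).IsInvertible := by
      obtain ⟨e, he⟩ := hinv0
      have hcts : ContinuousAt (fun q => fderiv ℝ (critG d ψ) q ∘L .inr ℝ _ _) (y0, z0) := by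
        have : ContinuousAt (fderiv ℝ (critG d ψ)) (y0, z0) :=
          (hG0.fderiv_right (m := 0) (by norm_cast)).continuousAt
        exact this.clm_comp continuousAt_const
      have := ContinuousLinearEquiv.nhds e
      rw [he] at this
      filter_upwards [hcts.eventually this] with q hq
      obtain ⟨e', he'⟩ := hq
      exact ⟨e', he'⟩
    have hVnear : ∀ᶠ q : EuclideanSpace ℝ (Fin ν) × EuclideanSpace ℝ (Fin ν) in 𝓝 (y0, z0), q.2 ∈ V :=
      continuousAt_snd.eventually (hV.mem_nhds hz0V)
    obtain ⟨O, hOsub, hOopen, hOmem⟩ := _root_.eventually_nhds_iff.1 ((huniq.and hinvnear).and hVnear)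
    have hpair : Tendsto (fun x => (x, φ (P x))) (𝓝 y0) (𝓝 (y0, z0)) :=
      tendsto_id.prodMk_nhds (hφc.comp hPc)
    have hev : ∀ᶠ x in 𝓝 y0, (P x ∈ U ∧ critG d ψ (x, φ (P x)) = 0) ∧ (x, φ (P x)) ∈ O :=
      hcrit.and (hpair.eventually (hOopen.mem_nhds hOmem))
    have hev2 := eventually_eventually_nhds.2 hev
    filter_upwards [hev2] with x1 hx1
    have hx1s := hx1.self_of_nhds
    set z1 := φ (P x1) with hz1
    have hO1 := hOsub _ hx1s.2
    have hG1 : ContDiffAt ℝ (⊤ : ℕ∞) (critG d ψ) (x1, z1) := critG_contDiffAt d hV hψ x1 z1 hO1.2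
    have hχ1 := hG1.contDiffAt_implicitFunction hn0 hO1.1.2
    have hself := hG1.implicitFunction_apply_self hn0 hO1.1.2
    have happ := hG1.eventually_apply_implicitFunction hn0 hO1.1.2
    set χ1 := hG1.implicitFunction hn0 hO1.1.2 with hχd
    simp only at hself happ hχ1
    have hcχ : Tendsto (fun x => (x, χ1 x)) (𝓝 x1) (𝓝 (x1, z1)) := by
      have := hχ1.continuousAt.tendsto
      rw [hself] at this
      exact tendsto_id.prodMk_nhds this
    have heq : P =ᶠ[𝓝 x1] fun x => ψ (χ1 x) := by
      filter_upwards [hx1, happ, hcχ.eventually (hOopen.mem_nhds hx1s.2)] with x hx hxa hxO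
      have a1 := (hOsub _ hx.2).1.1.1 hx.1.2
      rw [hx1s.1.2] at hxa
      have a2 := (hOsub _ hxO).1.1.1 hxa
      simp only at a1 a2
      rw [← a2, a1, hl _ hx.1.1]
    refine ContDiffAt.congr_of_eventuallyEq ?_ heq
    refine ContDiffAt.comp x1 (g := ψ) ?_ hχ1
    rw [hself]
    exact hψ.contDiffAt (hV.mem_nhds hO1.2)
  -- globalize
  have hW : {x | ContDiffAt ℝ (⊤ : ℕ∞) P x} ∈ 𝓝ˢ N := by
    rw [mem_nhdsSet_iff_forall]
    exact hloc
  obtain ⟨W, hWo, hNW, hWs⟩ := mem_nhdsSet_iff_exists.1 hW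
  obtain ⟨δ, hδ, hδs⟩ := hNcpt.exists_cthickening_subset_open hWo hNW
  refine ⟨δ, hδ, fun x hx => hWs (hδs ?_)⟩
  rw [cthickening_eq_preimage_infEDist, mem_preimage, mem_Iic]
  rw [infDist] at hx
  exact (ENNReal.le_ofReal_iff_toReal_le (infEDist_ne_top hne) hδ.le).2 hx

end

section
open Metric Set MeasureTheory Filter
open scoped ENNReal Topology

/-- the space `ℝ^{k+1}` written as a product, with the supremum norm -/
abbrev YY (k : ℕ) := (Fin k → ℝ) × ℝ

/-- the unit cube as the unit ball of `YY k` -/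
def cubeMap (k : ℕ) (x : Fin (k + 1) → unitInterval) : YY k :=
  (fun i => 2 * (x i.succ : ℝ) - 1, 2 * (x 0 : ℝ) - 1)

theorem cubeMap_continuous (k : ℕ) : Continuous (cubeMap k) := by
  unfold cubeMap; fun_prop

theorem cubeMap_boundary (k : ℕ) (x : Fin (k + 1) → unitInterval) (hx : x ∈ Cube.boundary (Fin (k + 1))) :
    1 ≤ ‖cubeMap k x‖ := by
  obtain ⟨i, hi⟩ := hx
  have key : |2 * (x i : ℝ) - 1| = 1 := by
    rcases hi with h | h <;> simp [h]
    norm_num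
  refine Fin.cases ?_ (fun j => ?_) i ?_ (motive := fun i => |2 * (x i : ℝ) - 1| = 1 → 1 ≤ ‖cubeMap k x‖)
  · intro h
    rw [← h]; exact norm_snd_le (cubeMap k x)
  · intro h
    rw [← h]
    exact (norm_le_pi_norm (cubeMap k x).1 j).trans (norm_fst_le (cubeMap k x))
  · exact key

/-- based loops, on the unit ball of `YY k` -/
structure IsLoop {ν k : ℕ} (N : Set (EuclideanSpace ℝ (Fin ν))) (b : EuclideanSpace ℝ (Fin ν))
    (f : YY k → EuclideanSpace ℝ (Fin ν)) : Prop where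
  cont : Continuous f
  mem : ∀ x, f x ∈ N
  out : ∀ x, 1 ≤ ‖x‖ → f x = b

/-- the underlying generalized loop -/
def loopOf {ν k : ℕ} {N : Set (EuclideanSpace ℝ (Fin ν))} {b : EuclideanSpace ℝ (Fin ν)} (hb : b ∈ N)
    {f : YY k → EuclideanSpace ℝ (Fin ν)} (h : IsLoop N b f) : GenLoop (Fin (k + 1)) N ⟨b, hb⟩ :=
  ⟨⟨fun x => ⟨f (cubeMap k x), h.mem _⟩, (h.cont.comp (cubeMap_continuous k)).subtype_mk _⟩,
    fun y hy => Subtype.ext (h.out _ (cubeMap_boundary k y hy))⟩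

/-- the homotopy class of a loop -/
def cls {ν k : ℕ} {N : Set (EuclideanSpace ℝ (Fin ν))} {b : EuclideanSpace ℝ (Fin ν)} (hb : b ∈ N)
    {f : YY k → EuclideanSpace ℝ (Fin ν)} (h : IsLoop N b f) : HomotopyGroup (Fin (k + 1)) N ⟨b, hb⟩ :=
  Quotient.mk _ (loopOf hb h)

theorem cls_eq {ν k : ℕ} {N : Set (EuclideanSpace ℝ (Fin ν))} {b : EuclideanSpace ℝ (Fin ν)} (hb : b ∈ N)
    {f g : YY k → EuclideanSpace ℝ (Fin ν)} (hf : IsLoop N b f) (hg : IsLoop N b g)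
    (H : ℝ × YY k → EuclideanSpace ℝ (Fin ν)) (hc : ContinuousOn H (Icc (0:ℝ) 1 ×ˢ univ))
    (hN : ∀ s ∈ Icc (0:ℝ) 1, ∀ x, H (s, x) ∈ N) (hout : ∀ s ∈ Icc (0:ℝ) 1, ∀ x, 1 ≤ ‖x‖ → H (s, x) = b)
    (h0 : ∀ x, H (0, x) = f x) (h1 : ∀ x, H (1, x) = g x) : cls hb hf = cls hb hg := by
  refine Quotient.sound ?_
  refine ⟨⟨⟨⟨fun q => ⟨H (q.1, cubeMap k q.2), hN _ q.1.2 _⟩, ?_⟩, ?_, ?_⟩, ?_⟩⟩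
  · refine Continuous.subtype_mk ?_ _
    refine hc.comp_continuous (f := fun q : unitInterval × (Fin (k+1) → unitInterval) => ((q.1 : ℝ), cubeMap k q.2)) ?_ ?_
    · exact (continuous_subtype_val.comp continuous_fst).prodMk ((cubeMap_continuous k).comp continuous_snd)
    · intro q; exact ⟨q.1.2, mem_univ _⟩
  · intro x
    exact Subtype.ext (h0 _)
  · intro x
    exact Subtype.ext (h1 _)
  · intro s x hx
    refine Subtype.ext ?_
    have := cubeMap_boundary k x hx
    change H (s, cubeMap k x) = f (cubeMap k x)
    rw [hout _ s.2 _ this, hf.out _ this]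

/-- clamping with a scaling factor -/
def clampMap (k : ℕ) (c : ℝ) (x : YY k) : Fin (k + 1) → unitInterval :=
  Fin.cases (projIcc 0 1 zero_le_one ((c * x.2 + 1) / 2)) (fun i => projIcc 0 1 zero_le_one ((c * x.1 i + 1) / 2))

theorem clampMap_continuous (k : ℕ) : Continuous (fun q : ℝ × YY k => clampMap k q.1 q.2) := by
  refine continuous_pi fun i => ?_
  refine Fin.cases ?_ (fun j => ?_) i
  · exact (continuous_projIcc (h := zero_le_one (α := ℝ))).comp (by fun_prop : Continuous fun q : ℝ × YY k => ((q.1 * q.2.2 + 1) / 2))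
  · exact (continuous_projIcc (h := zero_le_one (α := ℝ))).comp (by fun_prop : Continuous fun q : ℝ × YY k => ((q.1 * q.2.1 j + 1) / 2))

theorem clampMap_boundary (k : ℕ) (c : ℝ) (hc : 0 < c) (x : YY k) (hx : 1 ≤ c * ‖x‖) :
    clampMap k c x ∈ Cube.boundary (Fin (k + 1)) := by
  have aux : ∀ t : ℝ, 1 ≤ c * |t| → projIcc 0 1 zero_le_one ((c * t + 1) / 2) = 0 ∨
      projIcc (0:ℝ) 1 zero_le_one ((c * t + 1) / 2) = 1 := by
    intro t ht
    rcases abs_cases t with ⟨h, _⟩ | ⟨h, _⟩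
    · right; rw [h] at ht
      exact projIcc_of_right_le _ (by linarith)
    · left; rw [h] at ht
      exact projIcc_of_le_left _ (by linarith)
  have hx' : c⁻¹ ≤ ‖x‖ := by rw [inv_le_iff_one_le_mul₀' hc]; exact hx
  rw [Prod.norm_def, le_max_iff] at hx'
  rcases hx' with h | h
  · have : ∃ i, c⁻¹ ≤ |x.1 i| := by
      by_contra hcon
      push Not at hcon
      have := (pi_norm_lt_iff (x := x.1) (by positivity : 0 < c⁻¹)).2 (fun i => by simpa [Real.norm_eq_abs] using hcon i)
      linarith
    obtain ⟨i, hi⟩ := this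
    refine ⟨i.succ, aux _ ?_⟩
    rwa [inv_le_iff_one_le_mul₀' hc] at hi
  · refine ⟨0, aux _ ?_⟩
    rwa [inv_le_iff_one_le_mul₀' hc] at h

theorem clampMap_cubeMap (k : ℕ) (x : Fin (k + 1) → unitInterval) : clampMap k 1 (cubeMap k x) = x := by
  funext i
  refine Fin.cases ?_ (fun j => ?_) i
  · have : ((1 : ℝ) * (2 * (x 0 : ℝ) - 1) + 1) / 2 = x 0 := by ring
    simp only [clampMap, cubeMap, Fin.cases_zero, this]
    exact projIcc_val zero_le_one _
  · have : ((1 : ℝ) * (2 * (x j.succ : ℝ) - 1) + 1) / 2 = x j.succ := by ring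
    simp only [clampMap, cubeMap, Fin.cases_succ, this]
    exact projIcc_val zero_le_one _

theorem cls_surj {ν k : ℕ} {N : Set (EuclideanSpace ℝ (Fin ν))} {b : EuclideanSpace ℝ (Fin ν)} (hb : b ∈ N)
    (α : HomotopyGroup (Fin (k + 1)) N ⟨b, hb⟩) :
    ∃ (f : YY k → EuclideanSpace ℝ (Fin ν)) (hf : IsLoop N b f), (∀ x, 1 / 2 ≤ ‖x‖ → f x = b) ∧ cls hb hf = α := by
  induction α using Quotient.inductionOn with
  | h p =>
  have hmk : ∀ c : ℝ, 1 ≤ c → IsLoop N b (fun x : YY k => (p (clampMap k c x) : EuclideanSpace ℝ (Fin ν))) := by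
    intro c hc
    refine ⟨?_, fun x => (p _).2, fun x hx => ?_⟩
    · exact continuous_subtype_val.comp (p.1.continuous.comp
        ((clampMap_continuous k).comp (by fun_prop : Continuous fun x : YY k => (c, x))))
    · have := p.2 _ (clampMap_boundary k c (by linarith) x (by nlinarith))
      exact congrArg Subtype.val this
  refine ⟨_, hmk 2 (by norm_num), ?_, ?_⟩
  · intro x hx
    have := p.2 _ (clampMap_boundary k 2 (by norm_num) x (by linarith))
    exact congrArg Subtype.val this
  · have e1 : cls hb (hmk 1 le_rfl) = cls hb (hmk 2 (by norm_num)) := by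
      refine cls_eq hb _ _ (fun q => (p (clampMap k (1 + q.1) q.2) : EuclideanSpace ℝ (Fin ν))) ?_ ?_ ?_ ?_ ?_
      · refine Continuous.continuousOn ?_
        exact continuous_subtype_val.comp (p.1.continuous.comp
          ((clampMap_continuous k).comp (by fun_prop : Continuous fun q : ℝ × YY k => (1 + q.1, q.2))))
      · intro s _ x; exact (p _).2
      · intro s hs x hx; exact (hmk (1 + s) (by linarith [hs.1])).out x hx
      · intro x; simp
      · intro x; norm_num
    rw [← e1]
    refine congrArg (Quotient.mk _) ?_
    refine GenLoop.ext _ _ fun x => Subtype.ext ?_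
    change (p (clampMap k 1 (cubeMap k x)) : EuclideanSpace ℝ (Fin ν)) = p x
    rw [clampMap_cubeMap]

/-- a loop `F` close to a loop in `N` can be projected without changing the class -/
theorem cls_close {ν k : ℕ} {N : Set (EuclideanSpace ℝ (Fin ν))} {b : EuclideanSpace ℝ (Fin ν)} (hb : b ∈ N)
    {P : EuclideanSpace ℝ (Fin ν) → EuclideanSpace ℝ (Fin ν)} (hPN : ∀ x, P x ∈ N) (hPid : ∀ x ∈ N, P x = x)
    {δ : ℝ} (hP : ∀ x, infDist x N ≤ δ → ContinuousAt P x)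
    {f F : YY k → EuclideanSpace ℝ (Fin ν)} (hf : IsLoop N b f) (hF : Continuous F)
    (hFo : ∀ x, 1 ≤ ‖x‖ → F x = b) (hclose : ∀ x, dist (F x) (f x) ≤ δ) :
    ∃ h : IsLoop N b (fun x => P (F x)), cls hb h = cls hb hf := by
  have hd : ∀ s ∈ Icc (0:ℝ) 1, ∀ x, infDist (f x + s • (F x - f x)) N ≤ δ := by
    intro s hs x
    refine (infDist_le_dist_of_mem (hf.mem x)).trans ?_
    rw [dist_eq_norm, add_sub_cancel_left, norm_smul, Real.norm_of_nonneg hs.1, ← dist_eq_norm]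
    calc s * dist (F x) (f x) ≤ 1 * dist (F x) (f x) := by gcongr; exact hs.2
      _ ≤ δ := by rw [one_mul]; exact hclose x
  have hl : IsLoop N b (fun x => P (F x)) := by
    refine ⟨?_, fun x => hPN _, fun x hx => ?_⟩
    · rw [continuous_iff_continuousAt]
      intro x
      refine ContinuousAt.comp (hP _ ?_) hF.continuousAt
      exact (infDist_le_dist_of_mem (hf.mem x)).trans (hclose x)
    · simp only [hFo x hx]; exact hPid b hb
  refine ⟨hl, (cls_eq hb hf hl (fun q => P (f q.2 + q.1 • (F q.2 - f q.2))) ?_ ?_ ?_ ?_ ?_).symm⟩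
  · intro q hq
    refine ContinuousAt.continuousWithinAt ?_
    refine ContinuousAt.comp (g := P) (f := fun q : ℝ × YY k => f q.2 + q.1 • (F q.2 - f q.2)) (hP _ (hd q.1 hq.1 q.2)) ?_
    have := hf.cont
    fun_prop
  · intro s _ x; exact hPN _
  · intro s _ x hx
    simp only [hFo x hx, hf.out x hx]
    simpa using hPid b hb
  · intro x; simpa using hPid _ (hf.mem x)
  · intro x; simp

end

section
open Metric Set MeasureTheory Filter
open scoped ENNReal Topology

instance prodVolumeHaar {A B : Type*} [NormedAddCommGroup A] [NormedAddCommGroup B] [MeasureSpace A] [MeasureSpace B]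
    [BorelSpace A] [BorelSpace B] [SecondCountableTopology A] [SecondCountableTopology B]
    [SFinite (volume : Measure A)] [SFinite (volume : Measure B)]
    [(volume : Measure A).IsAddHaarMeasure] [(volume : Measure B).IsAddHaarMeasure] :
    (volume : Measure (A × B)).IsAddHaarMeasure := by
  rw [Measure.volume_eq_prod]; infer_instance

/-- the `p`-energy on `YY k` -/
def Kp {ν k : ℕ} (p : ℝ) (f : YY k → EuclideanSpace ℝ (Fin ν)) : ℝ≥0∞ :=
  ∫⁻ x, ENNReal.ofReal (‖fderiv ℝ f x‖ ^ p)

theorem c1_approx {ν k : ℕ} {F : YY k → EuclideanSpace ℝ (Fin ν)} (hF : Continuous F)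
    (hFs : ∀ x, 3 / 4 ≤ ‖x‖ → F x = 0) {ε : ℝ} (hε : 0 < ε) :
    ∃ G : YY k → EuclideanSpace ℝ (Fin ν), ContDiff ℝ (⊤ : ℕ∞) G ∧ (∀ x, 7 / 8 ≤ ‖x‖ → G x = 0) ∧
      (∀ x, dist (G x) (F x) ≤ ε) ∧ (ContDiff ℝ 1 F → ∀ x, dist (fderiv ℝ G x) (fderiv ℝ F x) ≤ ε) := by
  have hFc : HasCompactSupport F :=
    HasCompactSupport.of_support_subset_isCompact (isCompact_closedBall (0 : YY k) (3/4)) (by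
      intro x hx
      rw [mem_closedBall_zero_iff]
      by_contra hcon
      exact hx (hFs x (not_le.1 hcon).le))
  have hu := hFc.uniformContinuous_of_continuous hF
  rw [Metric.uniformContinuous_iff] at hu
  obtain ⟨r1, hr1, hu1⟩ := hu ε hε
  have hu2 : ∃ r2 > 0, ContDiff ℝ 1 F → ∀ {a b}, dist a b < r2 → dist (fderiv ℝ F a) (fderiv ℝ F b) < ε := by
    by_cases h : ContDiff ℝ 1 F
    · have := (hFc.fderiv ℝ).uniformContinuous_of_continuous (h.continuous_fderiv one_ne_zero)
      rw [Metric.uniformContinuous_iff] at this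
      obtain ⟨r2, hr2, h2⟩ := this ε hε
      exact ⟨r2, hr2, fun _ _ _ h => h2 h⟩
    · exact ⟨1, one_pos, fun h' => absurd h' h⟩
  obtain ⟨r2, hr2, hu2⟩ := hu2
  set r := min (min r1 r2) (1/8) with hr
  have hrpos : 0 < r := by positivity
  let φ : ContDiffBump (0 : YY k) := ⟨r / 2, r, by positivity, by linarith⟩
  have hφo : φ.rOut = r := rfl
  refine ⟨convolution (φ.normed volume) F (ContinuousLinearMap.lsmul ℝ ℝ) volume, ?_, ?_, ?_, ?_⟩
  · haveI : (volume : Measure (YY k)).IsNegInvariant := Measure.IsAddHaarMeasure.isNegInvariant_of_regular _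
    exact HasCompactSupport.contDiff_convolution_left _ φ.hasCompactSupport_normed φ.contDiff_normed hF.locallyIntegrable
  · intro x hx
    have := φ.dist_normed_convolution_le (μ := volume) (g := F) (x₀ := x) (ε := 0) hF.aestronglyMeasurable (by
      intro y hy
      rw [hφo, mem_ball] at hy
      have h1 : r ≤ 1/8 := min_le_right _ _
      rw [hFs x (by linarith), hFs y, dist_self]
      have := norm_sub_norm_le x y
      rw [← dist_eq_norm, dist_comm] at this
      linarith)
    rw [hFs x (by linarith)] at this
    exact dist_le_zero.1 this
  · intro x
    refine φ.dist_normed_convolution_le hF.aestronglyMeasurable ?_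
    intro y hy
    exact (hu1 (lt_of_lt_of_le (mem_ball.1 hy) ((min_le_left _ _).trans (min_le_left _ _)))).le
  · intro h x
    have hd := HasCompactSupport.hasFDerivAt_convolution_right (μ := volume) (f := φ.normed volume) (ContinuousLinearMap.lsmul ℝ ℝ) hFc
      (φ.continuous_normed.locallyIntegrable) h x
    rw [hd.fderiv, dist_eq_norm]
    refine ContinuousLinearMap.opNorm_le_bound _ hε.le fun v => ?_
    rw [_root_.sub_apply, convolution_precompR_apply _ φ.continuous_normed.locallyIntegrable (hFc.fderiv ℝ)
      (h.continuous_fderiv one_ne_zero), ← dist_eq_norm]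
    refine φ.dist_normed_convolution_le (g := fun a => fderiv ℝ F a v) ?_ ?_
    · exact ((h.continuous_fderiv one_ne_zero).clm_apply continuous_const).aestronglyMeasurable
    · intro y hy
      have := (hu2 h (lt_of_lt_of_le (mem_ball.1 hy) ((min_le_left _ _).trans (min_le_right _ _)))).le
      rw [dist_eq_norm] at this ⊢
      rw [← _root_.sub_apply]
      exact ContinuousLinearMap.le_of_opNorm_le _ this v

theorem add_rpow_le_two {a b p : ℝ} (ha : 0 ≤ a) (hb : 0 ≤ b) (hp : 0 ≤ p) :
    (a + b) ^ p ≤ 2 ^ p * (a ^ p + b ^ p) := by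
  have h1 : a + b ≤ 2 * max a b := by linarith [le_max_left a b, le_max_right a b]
  calc (a + b) ^ p ≤ (2 * max a b) ^ p := Real.rpow_le_rpow (by positivity) h1 hp
    _ = 2 ^ p * (max a b) ^ p := Real.mul_rpow (by norm_num) (by positivity)
    _ ≤ 2 ^ p * (a ^ p + b ^ p) := by
      gcongr
      have := Real.rpow_nonneg ha p
      have := Real.rpow_nonneg hb p
      rcases max_choice a b with h | h <;> rw [h] <;> linarith

theorem smoothing {ν k : ℕ} {N : Set (EuclideanSpace ℝ (Fin ν))} (hNcpt : IsCompact N)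
    (hNsub : IsSmoothSubmanifold N) {b : EuclideanSpace ℝ (Fin ν)} (hb : b ∈ N) {p : ℝ} (hp : 1 ≤ p) :
    ∃ C : ℝ≥0∞, C ≠ ⊤ ∧ ∀ (f : YY k → EuclideanSpace ℝ (Fin ν)) (hf : IsLoop N b f), (∀ x, 3 / 4 ≤ ‖x‖ → f x = b) →
      ∃ (g : YY k → EuclideanSpace ℝ (Fin ν)) (hg : IsLoop N b g), ContDiff ℝ (⊤ : ℕ∞) g ∧ cls hb hg = cls hb hf ∧
        (ContDiff ℝ 1 f → Kp p g ≤ C * (Kp p f + 1)) := by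
  obtain ⟨P, hPN, hPid, δ, hδ, hP⟩ := exists_retraction N hNcpt ⟨b, hb⟩ hNsub
  have hcomp : IsCompact {x | infDist x N ≤ δ} := by
    have : {x | infDist x N ≤ δ} = cthickening δ N := by
      ext x
      rw [mem_ofPred_eq, mem_cthickening_iff, infDist, ENNReal.le_ofReal_iff_toReal_le (infEDist_ne_top ⟨b, hb⟩) hδ.le]
    rw [this]
    exact hNcpt.cthickening
  have hcont : ContinuousOn (fun x => ‖fderiv ℝ P x‖) {x | infDist x N ≤ δ} := by
    intro x hx
    exact (((hP x hx).fderiv_right (m := 0) (by norm_num)).continuousAt).norm.continuousWithinAt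
  obtain ⟨L, hL⟩ := hcomp.bddAbove_image hcont
  have hL' : ∀ x, infDist x N ≤ δ → ‖fderiv ℝ P x‖ ≤ max L 0 := fun x hx => (hL ⟨x, hx, rfl⟩).trans (le_max_left _ _)
  set L' := max L 0 with hL'def
  have hL0 : 0 ≤ L' := le_max_right _ _
  refine ⟨ENNReal.ofReal ((2 * L') ^ p) * (1 + volume (ball (0 : YY k) 1)), ?_, ?_⟩
  · exact ENNReal.mul_ne_top ENNReal.ofReal_ne_top (ENNReal.add_ne_top.2 ⟨ENNReal.one_ne_top, measure_ball_lt_top.ne⟩)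
  intro f hf hfo
  obtain ⟨G, hG, hGo, hGd, hGf⟩ := c1_approx (F := fun x => f x - b) (hf.cont.sub continuous_const)
    (fun x hx => by simp [hfo x hx]) (lt_min hδ one_pos)
  have hclose : ∀ x, dist (b + G x) (f x) ≤ δ := by
    intro x
    have := (hGd x).trans (min_le_left _ _)
    rw [dist_eq_norm] at this ⊢
    have e : b + G x - f x = G x - (f x - b) := by abel
    rw [e]; exact this
  have hin : ∀ x, infDist (b + G x) N ≤ δ := fun x => (infDist_le_dist_of_mem (hf.mem x)).trans (hclose x)
  obtain ⟨hg, hcls⟩ := cls_close hb hPN hPid (fun x hx => (hP x hx).continuousAt) hf (F := fun x => b + G x)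
    (continuous_const.add hG.continuous) (fun x hx => by simp [hGo x (by linarith)]) hclose
  have hsm : ContDiff ℝ (⊤ : ℕ∞) (fun x => P (b + G x)) := by
    rw [contDiff_iff_contDiffAt]
    intro x
    exact ContDiffAt.comp x (hP _ (hin x)) (contDiff_const.add hG).contDiffAt
  refine ⟨_, hg, hsm, hcls, fun hf1 => ?_⟩
  have hpt : ∀ x, ENNReal.ofReal (‖fderiv ℝ (fun x => P (b + G x)) x‖ ^ p) ≤
      ENNReal.ofReal ((2 * L') ^ p) * (ENNReal.ofReal (‖fderiv ℝ f x‖ ^ p) + (ball (0 : YY k) 1).indicator 1 x) := by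
    intro x
    by_cases hx : ‖x‖ < 1
    · have h1 : fderiv ℝ (fun x => P (b + G x)) x = (fderiv ℝ P (b + G x)).comp (fderiv ℝ G x) := by
        have := fderiv_comp (𝕜 := ℝ) (g := P) (f := fun x => b + G x) x ((hP _ (hin x)).differentiableAt (by simp))
          ((contDiff_const.add hG).differentiable (by simp) x)
        rw [fderiv_const_add] at this
        exact this
      have h2 : ‖fderiv ℝ G x‖ ≤ ‖fderiv ℝ f x‖ + 1 := by
        have := (hGf (hf1.sub contDiff_const) x).trans (min_le_right _ _)
        rw [fderiv_sub_const, dist_eq_norm] at this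
        have h3 := norm_sub_norm_le (fderiv ℝ G x) (fderiv ℝ f x)
        linarith
      have h3 : ‖fderiv ℝ (fun x => P (b + G x)) x‖ ≤ L' * (‖fderiv ℝ f x‖ + 1) := by
        rw [h1]
        refine (ContinuousLinearMap.opNorm_comp_le _ _).trans ?_
        gcongr
        exact hL' _ (hin x)
      rw [indicator_of_mem (by simpa using hx), Pi.one_apply, ← ENNReal.ofReal_one, ← ENNReal.ofReal_add (by positivity) zero_le_one,
        ← ENNReal.ofReal_mul (by positivity)]
      refine ENNReal.ofReal_le_ofReal ?_
      calc _ ≤ (L' * (‖fderiv ℝ f x‖ + 1)) ^ p := Real.rpow_le_rpow (norm_nonneg _) h3 (by linarith)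
        _ = L' ^ p * (‖fderiv ℝ f x‖ + 1) ^ p := Real.mul_rpow hL0 (by positivity)
        _ ≤ L' ^ p * (2 ^ p * (‖fderiv ℝ f x‖ ^ p + 1 ^ p)) := by
          gcongr
          exact add_rpow_le_two (norm_nonneg _) zero_le_one (by linarith)
        _ = _ := by rw [Real.mul_rpow (by norm_num) hL0, Real.one_rpow]; ring
    · have h1 : (fun x => P (b + G x)) =ᶠ[𝓝 x] fun _ => P b := by
        have : {y : YY k | 7/8 < ‖y‖} ∈ 𝓝 x := (isOpen_lt continuous_const continuous_norm).mem_nhds (by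
          simp only [mem_ofPred_eq]; push Not at hx; linarith)
        filter_upwards [this] with y hy
        simp [hGo y (le_of_lt hy)]
      rw [h1.fderiv_eq]
      simp [Real.zero_rpow (by linarith : p ≠ 0)]
  calc Kp p (fun x => P (b + G x)) ≤ ∫⁻ x, ENNReal.ofReal ((2 * L') ^ p) * (ENNReal.ofReal (‖fderiv ℝ f x‖ ^ p) + (ball (0 : YY k) 1).indicator 1 x) :=
        lintegral_mono hpt
    _ = ENNReal.ofReal ((2 * L') ^ p) * (Kp p f + volume (ball (0 : YY k) 1)) := by
      rw [lintegral_const_mul' _ _ ENNReal.ofReal_ne_top, lintegral_add_right, lintegral_indicator_one measurableSet_ball]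
      · rfl
      · exact measurable_one.indicator measurableSet_ball
    _ ≤ _ := by
      rw [mul_assoc]
      gcongr
      rw [add_mul, one_mul, mul_add, mul_one]
      calc Kp p f + volume (ball (0 : YY k) 1) ≤ (Kp p f + 1) + (volume (ball (0 : YY k) 1) * Kp p f + volume (ball (0 : YY k) 1)) := by
            gcongr
            · exact le_self_add
            · exact le_add_self
        _ = _ := rfl

end

section
open Metric Set MeasureTheory Filter
open scoped ENNReal Topology

theorem ofReal_norm_rpow {F : Type*} [NormedAddCommGroup F] (a : F) {p : ℝ} (hp : 0 ≤ p) :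
    ENNReal.ofReal (‖a‖ ^ p) = ‖a‖ₑ ^ p := by
  rw [← ofReal_norm, ENNReal.ofReal_rpow_of_nonneg (norm_nonneg _) hp]

theorem enorm_sub_le_lintegral {E F : Type*} [NormedAddCommGroup E] [NormedSpace ℝ E]
    [NormedAddCommGroup F] [NormedSpace ℝ F] [CompleteSpace F] {f : E → F} (hf : ContDiff ℝ 1 f) (x h : E) :
    ‖f (x + h) - f x‖ₑ ≤ ∫⁻ s in Ioc (0:ℝ) 1, ‖h‖ₑ * ‖fderiv ℝ f (x + s • h)‖ₑ := by
  have hd : ∀ s : ℝ, HasDerivAt (fun s : ℝ => f (x + s • h)) (fderiv ℝ f (x + s • h) h) s := by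
    intro s
    have h1 : HasDerivAt (fun s : ℝ => x + s • h) h s := by
      simpa using ((hasDerivAt_id s).smul_const h).const_add x
    exact (hf.differentiable one_ne_zero (x + s • h)).hasFDerivAt.comp_hasDerivAt s h1
  have hc : Continuous (fun s : ℝ => fderiv ℝ f (x + s • h) h) := by
    have := hf.continuous_fderiv one_ne_zero
    exact (this.comp (by fun_prop)).clm_apply continuous_const
  have hi := intervalIntegral.integral_eq_sub_of_hasDerivAt (fun s _ => hd s) (hc.intervalIntegrable 0 1)
  simp only [one_smul, zero_smul, add_zero] at hi
  rw [← hi, intervalIntegral.integral_of_le zero_le_one]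
  refine (enorm_integral_le_lintegral_enorm _).trans (lintegral_mono fun s => ?_)
  rw [mul_comm]
  exact ContinuousLinearMap.le_opENorm _ _

theorem lintegral_comp_smul' {E : Type*} [NormedAddCommGroup E] [NormedSpace ℝ E]
    [MeasurableSpace E] [BorelSpace E] [FiniteDimensional ℝ E] (μ : Measure E) [μ.IsAddHaarMeasure] {r : ℝ} (hr : r ≠ 0)
    (g : E → ℝ≥0∞) : ∫⁻ x, g (r • x) ∂μ = ENNReal.ofReal |(r ^ Module.finrank ℝ E)⁻¹| * ∫⁻ x, g x ∂μ := by
  rw [← smul_eq_mul, ← lintegral_smul_measure, ← Measure.map_addHaar_smul μ hr]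
  exact (lintegral_map_equiv g ((Homeomorph.smulOfNeZero r hr).toMeasurableEquiv)).symm

theorem holder_set {E : Type*} [MeasurableSpace E] (μ : Measure E) {p : ℝ} (hp : 1 < p) {g : E → ℝ≥0∞}
    (hg : Measurable g) (s : Set E) :
    ∫⁻ x in s, g x ∂μ ≤ (∫⁻ x, g x ^ p ∂μ) ^ (1 / p) * μ s ^ (1 - 1 / p) := by
  have hc : p.HolderConjugate (p / (p - 1)) := Real.HolderConjugate.conjExponent hp
  have := ENNReal.lintegral_mul_le_Lp_mul_Lq (μ.restrict s) hc hg.aemeasurable (g := fun _ => 1) aemeasurable_const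
  simp only [Pi.mul_apply, mul_one, ENNReal.one_rpow, lintegral_const, Measure.restrict_apply MeasurableSet.univ, univ_inter, one_mul] at this
  refine this.trans ?_
  have e : 1 / (p / (p - 1)) = 1 - 1 / p := by
    have : p ≠ 0 := by linarith
    field_simp
  rw [e]
  gcongr
  exact Measure.restrict_le_self

theorem morrey_ball {E F : Type*} [NormedAddCommGroup E] [NormedSpace ℝ E]
    [MeasurableSpace E] [BorelSpace E] [FiniteDimensional ℝ E] (μ : Measure E) [μ.IsAddHaarMeasure]
    [NormedAddCommGroup F] [NormedSpace ℝ F] [CompleteSpace F] {f : E → F} (hf : ContDiff ℝ 1 f)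
    {p : ℝ} (hp : 1 < p) (x : E) {r : ℝ} :
    ∫⁻ h in ball (0 : E) r, ‖f (x + h) - f x‖ₑ ∂μ ≤
      ENNReal.ofReal r * (μ (ball 0 r) ^ (1 - 1 / p) * (∫⁻ y, ‖fderiv ℝ f y‖ₑ ^ p ∂μ) ^ (1 / p) *
        ∫⁻ s in Ioc (0:ℝ) 1, ENNReal.ofReal (s ^ (-(Module.finrank ℝ E : ℝ) / p))) := by
  have hfc := hf.continuous_fderiv one_ne_zero
  have : ProperSpace E := FiniteDimensional.proper_real E
  calc ∫⁻ h in ball (0 : E) r, ‖f (x + h) - f x‖ₑ ∂μ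
      ≤ ∫⁻ h in ball (0 : E) r, ENNReal.ofReal r * (∫⁻ s in Ioc (0:ℝ) 1, ‖fderiv ℝ f (x + s • h)‖ₑ) ∂μ := by
        refine setLIntegral_mono' measurableSet_ball fun h hh => ?_
        refine (enorm_sub_le_lintegral hf x h).trans ?_
        rw [lintegral_const_mul' _ _ enorm_ne_top]
        gcongr
        rw [← ofReal_norm]
        exact ENNReal.ofReal_le_ofReal (by simpa using (mem_ball.1 hh).le)
    _ = ENNReal.ofReal r * ∫⁻ s in Ioc (0:ℝ) 1, ∫⁻ h in ball (0 : E) r, ‖fderiv ℝ f (x + s • h)‖ₑ ∂μ := by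
        rw [lintegral_const_mul' _ _ ENNReal.ofReal_ne_top, lintegral_lintegral_swap]
        refine Measurable.aemeasurable ?_
        refine Continuous.measurable ?_
        refine Continuous.enorm ?_
        exact hfc.comp (by fun_prop)
    _ ≤ ENNReal.ofReal r * ∫⁻ s in Ioc (0:ℝ) 1, μ (ball 0 r) ^ (1 - 1 / p) * (∫⁻ y, ‖fderiv ℝ f y‖ₑ ^ p ∂μ) ^ (1 / p) *
          ENNReal.ofReal (s ^ (-(Module.finrank ℝ E : ℝ) / p)) := by
        gcongr ENNReal.ofReal r * ?_
        refine setLIntegral_mono' measurableSet_Ioc fun s hs => ?_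
        refine (holder_set μ hp (hfc.comp (by fun_prop : Continuous fun h : E => x + s • h)).enorm.measurable _).trans (le_of_eq ?_)
        have e1 := lintegral_comp_smul' μ hs.1.ne' (fun h => ‖fderiv ℝ f (x + h)‖ₑ ^ p)
        have e2 := lintegral_add_left_eq_self (μ := μ) (fun h => ‖fderiv ℝ f h‖ₑ ^ p) x
        rw [e2] at e1
        simp only [Function.comp_def]
        rw [e1, ENNReal.mul_rpow_of_nonneg _ _ (by positivity), ENNReal.ofReal_rpow_of_nonneg (by positivity) (by positivity)]
        have : (|(s ^ Module.finrank ℝ E)⁻¹|) ^ (1 / p) = s ^ (-(Module.finrank ℝ E : ℝ) / p) := by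
          have hs0 : 0 < s := hs.1
          rw [abs_of_pos (by positivity), ← Real.rpow_natCast, ← Real.rpow_neg hs0.le, ← Real.rpow_mul hs0.le]
          congr 1; ring
        rw [this]; ring
    _ = _ := by
        congr 1
        rw [lintegral_const_mul]
        fun_prop

theorem morrey {ν k : ℕ} {p : ℝ} (hp : (k : ℝ) + 1 < p) {A : ℝ≥0∞} (hA : A ≠ ⊤) {ε : ℝ} (hε : 0 < ε) :
    ∃ r > 0, ∀ f : YY k → EuclideanSpace ℝ (Fin ν), ContDiff ℝ 1 f → Kp p f ≤ A → ∀ x y, dist x y < r → dist (f x) (f y) ≤ ε := by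
  have hp1 : 1 < p := by have : (0:ℝ) ≤ k := by positivity
                         linarith
  set l := Module.finrank ℝ (YY k) with hl
  have hlk : l = k + 1 := by simp [hl]
  have hlp : (l : ℝ) / p < 1 := by rw [div_lt_one (by linarith), hlk]; push_cast; exact hp
  set ω := volume (ball (0 : YY k) 1) with hω
  have hω0 : ω ≠ 0 := (measure_ball_pos _ _ one_pos).ne'
  have hωt : ω ≠ ⊤ := measure_ball_lt_top.ne
  set c := ∫⁻ s in Ioc (0:ℝ) 1, ENNReal.ofReal (s ^ (-(l : ℝ) / p)) with hc
  have hct : c ≠ ⊤ := by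
    have h1 := (intervalIntegral.intervalIntegrable_rpow' (a := 0) (b := 1) (r := -(l : ℝ) / p) (by rw [neg_div]; linarith)).1
    exact (h1.lintegral_lt_top).ne
  -- the modulus
  set B : ℝ := (2 * 2 ^ l * (ω.toReal ^ (1 - 1 / p) * (A.toReal) ^ (1 / p) * c.toReal) / ω.toReal) with hB
  have hωpos : 0 < ω.toReal := ENNReal.toReal_pos hω0 hωt
  have hlim : Tendsto (fun r : ℝ => B * r ^ (1 - (l : ℝ) / p)) (𝓝 0) (𝓝 (B * 0)) := by
    refine Tendsto.const_mul _ ?_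
    have := (Real.continuousAt_rpow_const 0 (1 - (l : ℝ) / p) (Or.inr (by linarith)))
    have h2 := this.tendsto
    rwa [Real.zero_rpow (by linarith)] at h2
  rw [mul_zero] at hlim
  obtain ⟨R, hR, hRB⟩ := Metric.eventually_nhds_iff.1 (hlim.eventually (gt_mem_nhds hε))
  set r := R / 2 with hr
  have hr0 : 0 < r := by positivity
  have hrB : B * r ^ (1 - (l : ℝ) / p) < ε := hRB (by rw [Real.dist_eq, sub_zero, abs_of_pos hr0]; linarith)
  refine ⟨r / 2, by positivity, fun f hf hK x y hxy => ?_⟩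
  have hM : ∀ x, ∫⁻ z in ball x r, ‖f z - f x‖ₑ ≤
      ENNReal.ofReal (r * ((r ^ l * ω.toReal) ^ (1 - 1 / p) * (A.toReal) ^ (1 / p) * c.toReal)) := by
    intro x
    have h0 : ∫⁻ z in ball x r, ‖f z - f x‖ₑ = ∫⁻ h in ball (0 : YY k) r, ‖f (x + h) - f x‖ₑ := by
      rw [← lintegral_indicator measurableSet_ball, ← lintegral_indicator measurableSet_ball,
        ← lintegral_add_left_eq_self (μ := volume) _ x]
      congr 1; ext h
      simp [indicator, mem_ball, dist_eq_norm]
    rw [h0]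
    refine (morrey_ball volume hf hp1 x).trans ?_
    rw [ENNReal.ofReal_mul hr0.le, ENNReal.ofReal_mul (by positivity), ENNReal.ofReal_mul (by positivity), ENNReal.ofReal_toReal hct,
      ← ENNReal.ofReal_rpow_of_nonneg (by positivity) (by rw [sub_nonneg, div_le_one (by linarith)]; exact hp1.le),
      ← ENNReal.ofReal_rpow_of_nonneg (by positivity) (by positivity), ENNReal.ofReal_toReal hA,
      ENNReal.ofReal_mul (by positivity), ENNReal.ofReal_toReal hωt, Measure.addHaar_ball _ _ hr0.le]
    gcongr
    refine le_trans (le_of_eq ?_) hK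
    exact lintegral_congr fun x => (ofReal_norm_rpow _ (by linarith)).symm
  set M := r * ((r ^ l * ω.toReal) ^ (1 - 1 / p) * (A.toReal) ^ (1 / p) * c.toReal) with hMdef
  have hM0 : 0 ≤ M := by positivity
  have key : ‖f x - f y‖ₑ * volume (ball x (r / 2)) ≤ ENNReal.ofReal (2 * M) := by
    calc ‖f x - f y‖ₑ * volume (ball x (r / 2)) = ∫⁻ z in ball x (r / 2), ‖f x - f y‖ₑ := by simp
      _ ≤ ∫⁻ z in ball x (r / 2), (‖f z - f x‖ₑ + ‖f z - f y‖ₑ) := by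
        refine lintegral_mono fun z => ?_
        have : f x - f y = -(f z - f x) + (f z - f y) := by abel
        rw [this]
        refine (enorm_add_le _ _).trans ?_
        rw [enorm_neg]
      _ = (∫⁻ z in ball x (r / 2), ‖f z - f x‖ₑ) + ∫⁻ z in ball x (r / 2), ‖f z - f y‖ₑ := by
        refine lintegral_add_left ?_ _
        exact (hf.continuous.sub continuous_const).enorm.measurable
      _ ≤ ENNReal.ofReal M + ENNReal.ofReal M := by
        gcongr
        · exact (lintegral_mono_set (ball_subset_ball (by linarith))).trans (hM x)
        · refine (lintegral_mono_set ?_).trans (hM y)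
          exact ball_subset_ball' (by linarith)
      _ = _ := by rw [← ENNReal.ofReal_add hM0 hM0]; ring_nf
  rw [Measure.addHaar_ball _ _ (by positivity), ← hω, ← ENNReal.ofReal_toReal hωt, ← ofReal_norm, ← ENNReal.ofReal_mul (by positivity),
    ← ENNReal.ofReal_mul (by positivity), ENNReal.ofReal_le_ofReal_iff (by positivity)] at key
  rw [dist_eq_norm]
  refine le_trans ?_ hrB.le
  rw [← le_div_iff₀ (by positivity)] at key
  refine key.trans (le_of_eq ?_)
  rw [hMdef, hB, ← hl, Real.mul_rpow (by positivity) (by positivity)]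
  have e : r * (r ^ l) ^ (1 - 1 / p) = r ^ l * r ^ (1 - (l : ℝ) / p) := by
    rw [← Real.rpow_natCast, ← Real.rpow_mul hr0.le, ← Real.rpow_add hr0, ← Real.rpow_one_add' hr0.le]
    · congr 1; ring
    · have : (0:ℝ) ≤ l := by positivity
      have : 0 ≤ 1 - 1 / p := by rw [sub_nonneg, div_le_one (by linarith)]; exact hp1.le
      positivity
  clear_value r
  calc 2 * (r * ((r ^ l) ^ (1 - 1 / p) * ω.toReal ^ (1 - 1 / p) * A.toReal ^ (1 / p) * c.toReal)) / ((r / 2) ^ l * ω.toReal)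
      = 2 * ((r * (r ^ l) ^ (1 - 1 / p)) * (ω.toReal ^ (1 - 1 / p) * A.toReal ^ (1 / p) * c.toReal)) / ((r / 2) ^ l * ω.toReal) := by ring
    _ = _ := by
      rw [e, div_pow]
      field_simp

theorem finite_classes {ν k : ℕ} {N : Set (EuclideanSpace ℝ (Fin ν))} (hNcpt : IsCompact N)
    (hNsub : IsSmoothSubmanifold N) {b : EuclideanSpace ℝ (Fin ν)} (hb : b ∈ N) {p : ℝ} (hp : (k : ℝ) + 1 < p)
    {A : ℝ≥0∞} (hA : A ≠ ⊤) :
    {α : HomotopyGroup (Fin (k + 1)) N ⟨b, hb⟩ | ∃ (f : YY k → EuclideanSpace ℝ (Fin ν)) (hf : IsLoop N b f),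
      ContDiff ℝ 1 f ∧ cls hb hf = α ∧ Kp p f ≤ A}.Finite := by
  obtain ⟨P, hPN, hPid, δ, hδ, hP⟩ := exists_retraction N hNcpt ⟨b, hb⟩ hNsub
  obtain ⟨r, hr, hmor⟩ := morrey (ν := ν) hp hA (ε := δ / 4) (by positivity)
  obtain ⟨t, -, htf, ht⟩ := (isCompact_closedBall (0 : YY k) 1).finite_cover_balls hr
  obtain ⟨t', -, htf', ht'⟩ := hNcpt.finite_cover_balls (e := δ / 4) (by positivity)
  have : Finite t := htf
  have : Finite t' := htf'
  rw [← Set.finite_coe_iff]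
  choose f hf hf1 hcl hK using fun α : {α : HomotopyGroup (Fin (k + 1)) N ⟨b, hb⟩ | ∃ (f : YY k → EuclideanSpace ℝ (Fin ν)) (hf : IsLoop N b f),
      ContDiff ℝ 1 f ∧ cls hb hf = α ∧ Kp p f ≤ A} => α.2
  have hcode : ∀ α, ∀ i : t, ∃ j : t', dist (f α i) j < δ / 4 := by
    intro α i
    have := ht' ((hf α).mem i)
    simp only [mem_iUnion] at this
    obtain ⟨j, hj, h⟩ := this
    exact ⟨⟨j, hj⟩, h⟩
  choose code hcode using hcode
  refine Finite.of_injective code fun α β hαβ => Subtype.ext ?_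
  rw [← hcl α, ← hcl β]
  have hclose : ∀ x, dist (f β x) (f α x) ≤ δ := by
    intro x
    by_cases hx : ‖x‖ ≤ 1
    · have := ht (mem_closedBall_zero_iff.2 hx)
      simp only [mem_iUnion] at this
      obtain ⟨i, hi, h⟩ := this
      have h1 := hmor (f α) (hf1 α) (hK α) x i h
      have h2 := hmor (f β) (hf1 β) (hK β) x i h
      have h3 := hcode α ⟨i, hi⟩
      have h4 := hcode β ⟨i, hi⟩
      rw [hαβ] at h3
      simp only at h3 h4
      have h5 := dist_triangle4 (f β x) (f β i) (code β ⟨i, hi⟩) (f α i)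
      have h6 := dist_triangle (f β x) (f α i) (f α x)
      rw [dist_comm] at h1 h3
      linarith
    · push Not at hx
      rw [(hf α).out x hx.le, (hf β).out x hx.le, dist_self]
      exact hδ.le
  obtain ⟨h, he⟩ := cls_close hb hPN hPid (fun x hx => (hP x hx).continuousAt) (hf α) (hf β).cont (hf β).out hclose
  rw [← he]
  have : (fun x => P (f β x)) = f β := funext fun x => hPid _ ((hf β).mem x)
  simp only [this]

end

section
open Metric Set MeasureTheory Filter
open scoped ENNReal Topology

theorem scale_norm_rpow {E : Type*} [NormedAddCommGroup E] [NormedSpace ℝ E]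
    [MeasurableSpace E] [BorelSpace E] [FiniteDimensional ℝ E] (μ : Measure E) [μ.IsAddHaarMeasure] {S : Set E}
    (hS : MeasurableSet S) (a : ℝ) {δ : ℝ} (hδ : 0 < δ) :
    ∫⁻ h in (fun h => δ⁻¹ • h) ⁻¹' S, ENNReal.ofReal (‖h‖ ^ a) ∂μ =
      ENNReal.ofReal (δ ^ (a + Module.finrank ℝ E)) * ∫⁻ h in S, ENNReal.ofReal (‖h‖ ^ a) ∂μ := by
  have hm : MeasurableSet ((fun h : E => δ⁻¹ • h) ⁻¹' S) := (measurable_const_smul δ⁻¹) hS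
  rw [← lintegral_indicator hm, ← lintegral_indicator hS]
  have e : ∀ h : E, indicator ((fun h : E => δ⁻¹ • h) ⁻¹' S) (fun h => ENNReal.ofReal (‖h‖ ^ a)) h =
      ENNReal.ofReal (δ ^ a) * (indicator S (fun h => ENNReal.ofReal (‖h‖ ^ a))) (δ⁻¹ • h) := by
    intro h
    by_cases hh : δ⁻¹ • h ∈ S
    · rw [indicator_of_mem hh, indicator_of_mem (by exact hh), ← ENNReal.ofReal_mul (by positivity), norm_smul,
        Real.mul_rpow (by positivity) (by positivity), Real.norm_of_nonneg (by positivity), ← mul_assoc, Real.inv_rpow hδ.le,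
        mul_inv_cancel₀ (by positivity), one_mul]
    · rw [indicator_of_notMem hh, indicator_of_notMem (by exact hh), mul_zero]
  simp_rw [e]
  rw [lintegral_const_mul' _ _ ENNReal.ofReal_ne_top, lintegral_comp_smul' μ (inv_ne_zero hδ.ne') , ← mul_assoc,
    ← ENNReal.ofReal_mul (by positivity)]
  congr 2
  rw [abs_of_pos (by positivity), inv_pow, inv_inv, Real.rpow_add hδ, Real.rpow_natCast]

theorem near_finite {n : ℕ} (hn : 1 ≤ n) :
    ∫⁻ h in ball (0 : EuclideanSpace ℝ (Fin n)) 1, ENNReal.ofReal (‖h‖ ^ (1 - n : ℝ)) ≠ ⊤ := by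
  have : Nontrivial (EuclideanSpace ℝ (Fin n)) := by
    have : Nonempty (Fin n) := ⟨⟨0, hn⟩⟩
    infer_instance
  have h := (integrable_fun_norm_addHaar (volume : Measure (EuclideanSpace ℝ (Fin n))) (f := (Iio (1:ℝ)).indicator (fun t => t ^ (1 - n : ℝ)))).2 (by
    have h1 : IntegrableOn ((Iio (1:ℝ)).indicator (fun _ => (1:ℝ))) (Ioi 0) := by
      rw [IntegrableOn, integrable_indicator_iff measurableSet_Iio, IntegrableOn, Measure.restrict_restrict measurableSet_Iio]
      rw [inter_comm, Ioi_inter_Iio]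
      exact integrableOn_const (by simp)
    refine h1.congr_fun ?_ measurableSet_Ioi
    intro y hy
    simp only [finrank_euclideanSpace, Fintype.card_fin]
    have hy0 : (0:ℝ) < y := hy
    by_cases hy1 : y ∈ Iio (1:ℝ)
    · simp only [indicator_of_mem hy1]
      rw [smul_eq_mul, ← Real.rpow_natCast, ← Real.rpow_add hy0, Nat.cast_sub hn]
      simp
    · simp [indicator_of_notMem hy1])
  have h2 := h.lintegral_lt_top
  refine ne_of_lt (lt_of_le_of_lt (le_of_eq ?_) h2)
  rw [← lintegral_indicator measurableSet_ball]
  congr 1; ext h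
  by_cases hh : ‖h‖ < 1
  · rw [indicator_of_mem (by simpa using hh), indicator_of_mem (by exact hh)]
  · rw [indicator_of_notMem (by simpa using hh), indicator_of_notMem (by exact hh), ENNReal.ofReal_zero]

theorem far_finite {n : ℕ} {r : ℝ} (hr : (n : ℝ) < r) :
    ∫⁻ h in (ball (0 : EuclideanSpace ℝ (Fin n)) 1)ᶜ, ENNReal.ofReal (‖h‖ ^ (-r)) ≠ ⊤ := by
  have hr0 : 0 < r := lt_of_le_of_lt (by positivity) hr
  have := finite_integral_one_add_norm (E := EuclideanSpace ℝ (Fin n)) (μ := volume) (r := r) (by simpa using hr)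
  refine ne_of_lt (lt_of_le_of_lt (b := ∫⁻ h : EuclideanSpace ℝ (Fin n), ENNReal.ofReal (2 ^ r) * ENNReal.ofReal ((1 + ‖h‖) ^ (-r))) ?_ ?_)
  · refine (setLIntegral_mono' measurableSet_ball.compl (fun h hh => ?_)).trans (setLIntegral_le_lintegral _ _)
    rw [← ENNReal.ofReal_mul (by positivity)]
    refine ENNReal.ofReal_le_ofReal ?_
    have h1 : 1 ≤ ‖h‖ := by simpa using hh
    rw [Real.rpow_neg (by positivity), Real.rpow_neg (by positivity), ← div_eq_mul_inv, le_div_iff₀ (by positivity),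
      inv_mul_le_iff₀ (by positivity), ← Real.mul_rpow (by positivity) (by positivity)]
    exact Real.rpow_le_rpow (by positivity) (by linarith) hr0.le
  · rw [lintegral_const_mul' _ _ ENNReal.ofReal_ne_top]
    exact ENNReal.mul_lt_top ENNReal.ofReal_lt_top this

theorem enorm_sub_rpow_le {E F : Type*} [NormedAddCommGroup E] [NormedSpace ℝ E]
    [NormedAddCommGroup F] [NormedSpace ℝ F] [CompleteSpace F] {f : E → F} (hf : ContDiff ℝ 1 f) {p : ℝ} (hp : 1 < p) (x h : E) :
    ‖f (x + h) - f x‖ₑ ^ p ≤ ‖h‖ₑ ^ p * ∫⁻ s in Ioc (0:ℝ) 1, ‖fderiv ℝ f (x + s • h)‖ₑ ^ p := by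
  have h1 := enorm_sub_le_lintegral hf x h
  rw [lintegral_const_mul' _ _ enorm_ne_top] at h1
  have hfc := hf.continuous_fderiv one_ne_zero
  have h2 := holder_set (volume.restrict (Ioc (0:ℝ) 1)) hp (g := fun s => ‖fderiv ℝ f (x + s • h)‖ₑ)
    (hfc.comp (by fun_prop : Continuous fun s : ℝ => x + s • h)).enorm.measurable univ
  simp only [Measure.restrict_univ, Measure.restrict_apply MeasurableSet.univ, univ_inter, Real.volume_Ioc, sub_zero,
    ENNReal.ofReal_one, ENNReal.one_rpow, mul_one] at h2
  calc ‖f (x + h) - f x‖ₑ ^ p ≤ (‖h‖ₑ * (∫⁻ s in Ioc (0:ℝ) 1, ‖fderiv ℝ f (x + s • h)‖ₑ ^ p) ^ (1 / p)) ^ p := by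
        gcongr
        exact h1.trans (by gcongr)
    _ = _ := by
      rw [ENNReal.mul_rpow_of_nonneg _ _ (by linarith), ← ENNReal.rpow_mul, one_div_mul_cancel (by linarith), ENNReal.rpow_one]

theorem gag_upper (n : ℕ) (hn : 1 ≤ n) (ν : ℕ) {p : ℝ} (hp : 1 < p) (D : ℝ) (hD : 0 ≤ D) :
    ∃ C : ℝ≥0∞, C ≠ ⊤ ∧ ∀ u : EuclideanSpace ℝ (Fin n) → EuclideanSpace ℝ (Fin ν), ContDiff ℝ 1 u → (∀ x y, ‖u y - u x‖ ≤ D) →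
      ∫⁻ x, ‖fderiv ℝ u x‖ₑ ^ p ≠ ⊤ →
      gagliardoE (1 - 1 / p) p (ball 0 1) u ≤ C * (1 + ∫⁻ x, ‖fderiv ℝ u x‖ₑ ^ p) ^ (1 - 1 / p) := by
  set C1 := ∫⁻ h in ball (0 : EuclideanSpace ℝ (Fin n)) 1, ENNReal.ofReal (‖h‖ ^ (1 - n : ℝ)) with hC1
  set C2 := ∫⁻ h in (ball (0 : EuclideanSpace ℝ (Fin n)) 1)ᶜ, ENNReal.ofReal (‖h‖ ^ (-(n + p - 1) : ℝ)) with hC2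
  have hC1t : C1 ≠ ⊤ := near_finite hn
  have hC2t : C2 ≠ ⊤ := far_finite (by linarith)
  set ω := volume (ball (0 : EuclideanSpace ℝ (Fin n)) 1) with hω
  have hωt : ω ≠ ⊤ := measure_ball_lt_top.ne
  refine ⟨C1 + ω * (ENNReal.ofReal (D ^ p) * C2), ENNReal.add_ne_top.2 ⟨hC1t, ENNReal.mul_ne_top hωt (ENNReal.mul_ne_top ENNReal.ofReal_ne_top hC2t)⟩, ?_⟩
  intro u hu huD hK
  set K := ∫⁻ x, ‖fderiv ℝ u x‖ₑ ^ p with hKdef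
  have hfc := hu.continuous_fderiv one_ne_zero
  have hp0 : p ≠ 0 := by linarith
  set κ : ℝ := 1 + K.toReal with hκ
  have hκ1 : 1 ≤ κ := by simp [hκ]
  have hκ0 : 0 < κ := by linarith
  have hκK : 1 + K = ENNReal.ofReal κ := by
    rw [hκ, ENNReal.ofReal_add zero_le_one ENNReal.toReal_nonneg, ENNReal.ofReal_one, ENNReal.ofReal_toReal hK]
  set δ : ℝ := κ ^ (-(1 / p)) with hδ
  have hδ0 : 0 < δ := by positivity
  set B : Set (EuclideanSpace ℝ (Fin n)) := (fun h => δ⁻¹ • h) ⁻¹' (ball 0 1) with hB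
  have hBm : MeasurableSet B := (measurable_const_smul δ⁻¹) measurableSet_ball
  have hnear : ∀ x h : EuclideanSpace ℝ (Fin n), ENNReal.ofReal (‖u (x + h) - u x‖ ^ p / ‖h‖ ^ ((n : ℝ) + (1 - 1 / p) * p)) ≤
      ENNReal.ofReal (‖h‖ ^ (1 - n : ℝ)) * ∫⁻ s in Ioc (0:ℝ) 1, ‖fderiv ℝ u (x + s • h)‖ₑ ^ p := by
    intro x h
    by_cases hh : h = 0
    · simp [hh, Real.zero_rpow hp0]
    have hh0 : 0 < ‖h‖ := norm_pos_iff.2 hh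
    rw [div_eq_mul_inv, mul_comm, ENNReal.ofReal_mul (by positivity), ofReal_norm_rpow _ (by linarith)]
    calc ENNReal.ofReal ((‖h‖ ^ ((n : ℝ) + (1 - 1 / p) * p))⁻¹) * ‖u (x + h) - u x‖ₑ ^ p
        ≤ ENNReal.ofReal ((‖h‖ ^ ((n : ℝ) + (1 - 1 / p) * p))⁻¹) * (‖h‖ₑ ^ p * ∫⁻ s in Ioc (0:ℝ) 1, ‖fderiv ℝ u (x + s • h)‖ₑ ^ p) := by
          gcongr
          exact enorm_sub_rpow_le hu hp x h
      _ = _ := by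
          rw [← mul_assoc, ← ofReal_norm_rpow h (by linarith : 0 ≤ p), ← ENNReal.ofReal_mul (by positivity), ← Real.rpow_neg hh0.le,
            ← Real.rpow_add hh0]
          congr 3
          field_simp
          ring
  have hfar : ∀ x h : EuclideanSpace ℝ (Fin n), ENNReal.ofReal (‖u (x + h) - u x‖ ^ p / ‖h‖ ^ ((n : ℝ) + (1 - 1 / p) * p)) ≤
      ENNReal.ofReal (D ^ p) * ENNReal.ofReal (‖h‖ ^ (-(n + p - 1) : ℝ)) := by
    intro x h
    rw [← ENNReal.ofReal_mul (by positivity)]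
    refine ENNReal.ofReal_le_ofReal ?_
    rw [Real.rpow_neg (norm_nonneg _), ← div_eq_mul_inv]
    have : (n : ℝ) + (1 - 1 / p) * p = n + p - 1 := by field_simp; ring
    rw [this]
    gcongr
    exact huD _ _
  have hI1 : ∫⁻ h in B, ENNReal.ofReal (‖h‖ ^ (1 - n : ℝ)) = ENNReal.ofReal δ * C1 := by
    rw [hB, scale_norm_rpow volume measurableSet_ball _ hδ0, finrank_euclideanSpace, Fintype.card_fin]
    simp [hC1]
  have hI2 : ∫⁻ h in Bᶜ, ENNReal.ofReal (‖h‖ ^ (-(n + p - 1) : ℝ)) = ENNReal.ofReal (δ ^ (1 - p)) * C2 := by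
    rw [hB, ← preimage_compl, scale_norm_rpow volume measurableSet_ball.compl _ hδ0, finrank_euclideanSpace, Fintype.card_fin]
    congr 3; ring
  have hmeas : Measurable (fun q : EuclideanSpace ℝ (Fin n) × EuclideanSpace ℝ (Fin n) =>
      ENNReal.ofReal (‖q.2‖ ^ (1 - n : ℝ)) * ∫⁻ s in Ioc (0:ℝ) 1, ‖fderiv ℝ u (q.1 + s • q.2)‖ₑ ^ p) := by
    refine Measurable.mul (by fun_prop) ?_
    refine Measurable.lintegral_prod_right' (f := fun z : (EuclideanSpace ℝ (Fin n) × EuclideanSpace ℝ (Fin n)) × ℝ => ‖fderiv ℝ u (z.1.1 + z.2 • z.1.2)‖ₑ ^ p) ?_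
    refine Measurable.pow_const ?_ _
    exact (hfc.comp (by fun_prop)).enorm.measurable
  calc gagliardoE (1 - 1 / p) p (ball 0 1) u
      ≤ ∫⁻ x in ball (0 : EuclideanSpace ℝ (Fin n)) 1, ((∫⁻ h in B, ENNReal.ofReal (‖h‖ ^ (1 - n : ℝ)) * ∫⁻ s in Ioc (0:ℝ) 1, ‖fderiv ℝ u (x + s • h)‖ₑ ^ p)
          + ∫⁻ h in Bᶜ, ENNReal.ofReal (D ^ p) * ENNReal.ofReal (‖h‖ ^ (-(n + p - 1) : ℝ))) := by
        unfold gagliardoE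
        refine lintegral_mono fun x => ?_
        refine (setLIntegral_le_lintegral _ _).trans ?_
        rw [← lintegral_add_left_eq_self (μ := volume) _ x, ← lintegral_add_compl _ hBm]
        simp only [add_sub_cancel_left]
        exact add_le_add (lintegral_mono fun h => hnear x h) (lintegral_mono fun h => hfar x h)
    _ ≤ (∫⁻ x, ∫⁻ h in B, ENNReal.ofReal (‖h‖ ^ (1 - n : ℝ)) * ∫⁻ s in Ioc (0:ℝ) 1, ‖fderiv ℝ u (x + s • h)‖ₑ ^ p)
          + ω * (ENNReal.ofReal (D ^ p) * (ENNReal.ofReal (δ ^ (1 - p)) * C2)) := by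
        rw [lintegral_const_mul' _ _ ENNReal.ofReal_ne_top, hI2, lintegral_add_right _ measurable_const, lintegral_const,
          Measure.restrict_apply MeasurableSet.univ, univ_inter, mul_comm ω]
        gcongr
        exact Measure.restrict_le_self
    _ = (∫⁻ h in B, ENNReal.ofReal (‖h‖ ^ (1 - n : ℝ)) * K) + ω * (ENNReal.ofReal (D ^ p) * (ENNReal.ofReal (δ ^ (1 - p)) * C2)) := by
        congr 1
        rw [lintegral_lintegral_swap hmeas.aemeasurable]
        refine lintegral_congr fun h => ?_
        rw [lintegral_const_mul' _ _ ENNReal.ofReal_ne_top, lintegral_lintegral_swap]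
        · congr 1
          calc ∫⁻ s in Ioc (0:ℝ) 1, ∫⁻ x, ‖fderiv ℝ u (x + s • h)‖ₑ ^ p = ∫⁻ s in Ioc (0:ℝ) 1, K := by
                refine lintegral_congr fun s => ?_
                exact lintegral_add_right_eq_self (fun x => ‖fderiv ℝ u x‖ₑ ^ p) (s • h)
            _ = K := by simp
        · refine Measurable.aemeasurable ?_
          refine Measurable.pow_const ?_ _
          exact (hfc.comp (by fun_prop)).enorm.measurable
    _ = ENNReal.ofReal δ * C1 * K + ω * (ENNReal.ofReal (D ^ p) * (ENNReal.ofReal (δ ^ (1 - p)) * C2)) := by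
        rw [lintegral_mul_const' _ _ hK, hI1]
    _ ≤ _ := by
        have e1 : ENNReal.ofReal (δ ^ (1 - p)) = (1 + K) ^ (1 - 1 / p) := by
          rw [hκK, ENNReal.ofReal_rpow_of_pos hκ0, hδ, ← Real.rpow_mul hκ0.le]
          congr 2; field_simp; ring
        have e2 : ENNReal.ofReal δ * K ≤ (1 + K) ^ (1 - 1 / p) := by
          calc ENNReal.ofReal δ * K ≤ ENNReal.ofReal δ * (1 + K) := by gcongr; exact le_add_self
            _ = _ := by
              rw [hκK, ENNReal.ofReal_rpow_of_pos hκ0, hδ, ← ENNReal.ofReal_mul (by positivity), ← Real.rpow_add_one hκ0.ne']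
              congr 2; ring
        rw [e1]
        calc ENNReal.ofReal δ * C1 * K + ω * (ENNReal.ofReal (D ^ p) * ((1 + K) ^ (1 - 1 / p) * C2))
            = C1 * (ENNReal.ofReal δ * K) + ω * (ENNReal.ofReal (D ^ p) * C2) * (1 + K) ^ (1 - 1 / p) := by ring
          _ ≤ C1 * (1 + K) ^ (1 - 1 / p) + ω * (ENNReal.ofReal (D ^ p) * C2) * (1 + K) ^ (1 - 1 / p) := by gcongr
          _ = _ := by ring

end

section
open Metric Set MeasureTheory Filter
open scoped ENNReal Topology

theorem lintegral_comp_equiv {V W : Type*} [NormedAddCommGroup V] [NormedSpace ℝ V] [MeasureSpace V] [BorelSpace V] [FiniteDimensional ℝ V]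
    [(volume : Measure V).IsAddHaarMeasure]
    [NormedAddCommGroup W] [NormedSpace ℝ W] [MeasureSpace W] [BorelSpace W] [FiniteDimensional ℝ W] [(volume : Measure W).IsAddHaarMeasure]
    (e : V ≃L[ℝ] W) : ∃ c : ℝ≥0∞, c ≠ ⊤ ∧ ∀ g : W → ℝ≥0∞, ∫⁻ x, g (e x) = c * ∫⁻ w, g w := by
  have : (Measure.map e (volume : Measure V)).IsAddHaarMeasure := e.isAddHaarMeasure_map volume
  have : ProperSpace W := FiniteDimensional.proper_real W
  have h := Measure.isAddLeftInvariant_eq_smul (Measure.map e (volume : Measure V)) (volume : Measure W)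
  refine ⟨((Measure.map e (volume : Measure V)).addHaarScalarFactor volume : NNReal), ENNReal.coe_ne_top, fun g => ?_⟩
  have h2 := lintegral_map_equiv (μ := (volume : Measure V)) g e.toHomeomorph.toMeasurableEquiv
  change ∫⁻ w, g w ∂(Measure.map e volume) = ∫⁻ x, g (e x) at h2
  have h3 := congrArg (fun μ => ∫⁻ w, g w ∂μ) h
  simp only [lintegral_smul_measure] at h3
  rw [← h2, h3]
  simp [ENNReal.smul_def]

/-- the space `ℝ^k × ℝ^d` -/
abbrev WW (k d : ℕ) := (Fin k → ℝ) × EuclideanSpace ℝ (Fin d)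

/-- the tubular coordinates -/
def qm (k d : ℕ) (w : WW k d) : YY k := (w.1, ‖w.2‖ - 10)

theorem qm_lip (k d : ℕ) : LipschitzWith 1 (qm k d) := by
  refine LipschitzWith.of_dist_le_mul fun x y => ?_
  rw [NNReal.coe_one, one_mul, Prod.dist_eq, Prod.dist_eq]
  refine max_le_max le_rfl ?_
  simp only [qm, Real.dist_eq]
  rw [dist_eq_norm]
  rw [sub_sub_sub_cancel_right]
  exact abs_norm_sub_norm_le x.2 y.2

theorem qm_out {k d : ℕ} {w : WW k d} (h : 1 ≤ ‖w.1‖ ∨ 11 ≤ ‖w.2‖ ∨ ‖w.2‖ ≤ 9) : 1 ≤ ‖qm k d w‖ := by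
  rw [Prod.norm_def, le_max_iff]
  rcases h with h | h | h
  · left; exact h
  · right; simp only [qm, Real.norm_eq_abs]; rw [le_abs]; left; linarith
  · right; simp only [qm, Real.norm_eq_abs]; rw [le_abs]; right; linarith

theorem qm_contDiffAt {k d : ℕ} {w : WW k d} (h : w.2 ≠ 0) : ContDiffAt ℝ (⊤ : ℕ∞) (qm k d) w := by
  refine ContDiffAt.prodMk contDiffAt_fst ?_
  refine ContDiffAt.sub ?_ contDiffAt_const
  exact (contDiffAt_norm ℝ h).comp w contDiffAt_snd

theorem loop_qm_const {ν k d : ℕ} {N : Set (EuclideanSpace ℝ (Fin ν))} {b : EuclideanSpace ℝ (Fin ν)}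
    {f : YY k → EuclideanSpace ℝ (Fin ν)} (hf : IsLoop N b f) {w : WW k d} (h : w.2 = 0) :
    (fun w => f (qm k d w)) =ᶠ[𝓝 w] fun _ => b := by
  have : {y : WW k d | ‖y.2‖ < 9} ∈ 𝓝 w := (isOpen_lt (by fun_prop) continuous_const).mem_nhds (by simp [h])
  filter_upwards [this] with y hy
  exact hf.out _ (qm_out (Or.inr (Or.inr (le_of_lt hy))))

theorem loop_qm_smooth {ν k d : ℕ} {N : Set (EuclideanSpace ℝ (Fin ν))} {b : EuclideanSpace ℝ (Fin ν)}
    {f : YY k → EuclideanSpace ℝ (Fin ν)} (hf : IsLoop N b f) (hfs : ContDiff ℝ (⊤ : ℕ∞) f) :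
    ContDiff ℝ (⊤ : ℕ∞) (fun w => f (qm k d w)) := by
  rw [contDiff_iff_contDiffAt]
  intro w
  by_cases h : w.2 = 0
  · exact contDiffAt_const.congr_of_eventuallyEq (loop_qm_const hf h)
  · exact hfs.contDiffAt.comp w (qm_contDiffAt h)

theorem loop_qm_fderiv {ν k d : ℕ} {N : Set (EuclideanSpace ℝ (Fin ν))} {b : EuclideanSpace ℝ (Fin ν)}
    {f : YY k → EuclideanSpace ℝ (Fin ν)} (hf : IsLoop N b f) (hfs : ContDiff ℝ (⊤ : ℕ∞) f) (w : WW k d) :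
    ‖fderiv ℝ (fun w => f (qm k d w)) w‖ ≤ ‖fderiv ℝ f (qm k d w)‖ := by
  by_cases h : w.2 = 0
  · rw [(loop_qm_const hf h).fderiv_eq]; simp
  · have := fderiv_comp (𝕜 := ℝ) w (hfs.differentiable (by simp) (qm k d w)) ((qm_contDiffAt h).differentiableAt (by simp))
    change ‖fderiv ℝ (f ∘ qm k d) w‖ ≤ _
    rw [this]
    refine (ContinuousLinearMap.opNorm_comp_le _ _).trans ?_
    have h2 := norm_fderiv_le_of_lipschitz ℝ (x₀ := w) (qm_lip k d)
    simpa using mul_le_mul_of_nonneg_left h2 (norm_nonneg (fderiv ℝ f (qm k d w)))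

theorem radial_le {d : ℕ} (hd : 1 ≤ d) : ∃ C : ℝ≥0∞, C ≠ ⊤ ∧ ∀ h : ℝ → ℝ, Continuous h → (∀ r, 0 ≤ h r) →
    (∀ r, h r ≠ 0 → r ∈ Icc (9:ℝ) 11) →
    ∫⁻ a : EuclideanSpace ℝ (Fin d), ENNReal.ofReal (h ‖a‖) ≤ C * ∫⁻ r, ENNReal.ofReal (h r) := by
  have : Nontrivial (EuclideanSpace ℝ (Fin d)) := by
    have : Nonempty (Fin d) := ⟨⟨0, hd⟩⟩
    infer_instance
  set V := volume.real (ball (0 : EuclideanSpace ℝ (Fin d)) 1) with hV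
  have hV0 : 0 ≤ V := measureReal_nonneg
  refine ⟨ENNReal.ofReal (d * (V * 11 ^ (d - 1))), ENNReal.ofReal_ne_top, fun h hc h0 hs => ?_⟩
  have hcs : HasCompactSupport h := HasCompactSupport.of_support_subset_isCompact isCompact_Icc (fun r hr => hs r hr)
  have hhi := hc.integrable_of_hasCompactSupport hcs (μ := volume)
  have hintw : Integrable (fun r => r ^ (d - 1) * h r) := by
    refine Continuous.integrable_of_hasCompactSupport (by fun_prop) ?_
    exact hcs.mul_left
  have hinta : Integrable (fun a : EuclideanSpace ℝ (Fin d) => h ‖a‖) := by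
    refine (integrable_fun_norm_addHaar volume).2 ?_
    simp only [finrank_euclideanSpace, Fintype.card_fin, smul_eq_mul]
    exact hintw.integrableOn
  rw [← ofReal_integral_eq_lintegral_ofReal hinta (ae_of_all _ fun a => h0 _), ← ofReal_integral_eq_lintegral_ofReal hhi (ae_of_all _ h0),
    integral_fun_norm_addHaar, ← ENNReal.ofReal_mul (by positivity)]
  refine ENNReal.ofReal_le_ofReal ?_
  simp only [finrank_euclideanSpace, Fintype.card_fin, smul_eq_mul, nsmul_eq_mul]
  rw [mul_assoc, mul_assoc]
  gcongr
  rw [← integral_const_mul]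
  have hpos : ∀ r, 0 ≤ 11 ^ (d - 1) * h r := fun r => mul_nonneg (by positivity) (h0 r)
  calc ∫ y in Ioi 0, y ^ (d - 1) * h y ≤ ∫ y in Ioi 0, 11 ^ (d - 1) * h y := by
        refine setIntegral_mono_on hintw.integrableOn (hhi.const_mul _).integrableOn measurableSet_Ioi fun y hy => ?_
        by_cases hy0 : h y = 0
        · simp [hy0]
        · have := hs y hy0
          have := h0 y
          have hy' : (0:ℝ) < y := hy
          gcongr
          exact (hs y hy0).2
    _ ≤ _ := setIntegral_le_integral (hhi.const_mul _) (ae_of_all _ hpos)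

theorem fderiv_zero_of_loop {ν k : ℕ} {N : Set (EuclideanSpace ℝ (Fin ν))} {b : EuclideanSpace ℝ (Fin ν)}
    {f : YY k → EuclideanSpace ℝ (Fin ν)} (hf : IsLoop N b f) {z : YY k} (hz : 1 < ‖z‖) : fderiv ℝ f z = 0 := by
  have : f =ᶠ[𝓝 z] fun _ => b := by
    filter_upwards [(isOpen_lt continuous_const continuous_norm).mem_nhds hz] with y hy
    exact hf.out y (le_of_lt hy)
  rw [this.fderiv_eq]; simp

theorem Kp_finite {ν k : ℕ} {N : Set (EuclideanSpace ℝ (Fin ν))} {b : EuclideanSpace ℝ (Fin ν)}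
    {f : YY k → EuclideanSpace ℝ (Fin ν)} (hf : IsLoop N b f) (hfs : ContDiff ℝ (⊤ : ℕ∞) f) {p : ℝ} (hp : 0 < p) : Kp p f ≠ ⊤ := by
  have hc := hfs.continuous_fderiv (by simp)
  have : Integrable (fun z => ‖fderiv ℝ f z‖ ^ p) := by
    refine Continuous.integrable_of_hasCompactSupport (hc.norm.rpow_const (fun _ => Or.inr hp.le)) ?_
    refine HasCompactSupport.of_support_subset_isCompact (isCompact_closedBall (0 : YY k) 1) fun z hz => ?_
    rw [mem_closedBall_zero_iff]
    by_contra hcon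
    exact hz (by simp [fderiv_zero_of_loop hf (not_le.1 hcon), Real.zero_rpow hp.ne'])
  exact this.lintegral_lt_top.ne

theorem tube_energy {k d : ℕ} (hd : 1 ≤ d) {p : ℝ} (hp : 1 < p) {n : ℕ} (e : EuclideanSpace ℝ (Fin n) ≃L[ℝ] WW k d) :
    ∃ C : ℝ≥0∞, C ≠ ⊤ ∧ ∀ {ν : ℕ} {N : Set (EuclideanSpace ℝ (Fin ν))} {b : EuclideanSpace ℝ (Fin ν)}
      {f : YY k → EuclideanSpace ℝ (Fin ν)} (_ : IsLoop N b f) (_ : ContDiff ℝ (⊤ : ℕ∞) f),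
      ∫⁻ x, ‖fderiv ℝ (fun x => f (qm k d (e x))) x‖ₑ ^ p ≤ C * Kp p f := by
  obtain ⟨c, hc, hce⟩ := lintegral_comp_equiv e
  obtain ⟨C, hC, hrad⟩ := radial_le hd
  refine ⟨‖(e : EuclideanSpace ℝ (Fin n) →L[ℝ] WW k d)‖ₑ ^ p * (c * C), ?_, ?_⟩
  · exact ENNReal.mul_ne_top (ENNReal.rpow_ne_top_of_nonneg (by linarith) enorm_ne_top) (ENNReal.mul_ne_top hc hC)
  intro ν N b f hf hfs
  have hfc := hfs.continuous_fderiv (by simp)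
  have h1 : ∀ x, ‖fderiv ℝ (fun x => f (qm k d (e x))) x‖ₑ ^ p ≤
      ‖(e : EuclideanSpace ℝ (Fin n) →L[ℝ] WW k d)‖ₑ ^ p * ENNReal.ofReal (‖fderiv ℝ f (qm k d (e x))‖ ^ p) := by
    intro x
    have := e.comp_right_fderiv (f := fun w => f (qm k d w)) (x := x)
    change ‖fderiv ℝ ((fun w => f (qm k d w)) ∘ e) x‖ₑ ^ p ≤ _
    rw [this, ofReal_norm_rpow _ (by linarith), ← ENNReal.mul_rpow_of_nonneg _ _ (by linarith)]
    gcongr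
    rw [← ofReal_norm, ← ofReal_norm, ← ofReal_norm, ← ENNReal.ofReal_mul (norm_nonneg _)]
    refine ENNReal.ofReal_le_ofReal ?_
    refine (ContinuousLinearMap.opNorm_comp_le _ _).trans ?_
    rw [mul_comm]
    gcongr
    exact loop_qm_fderiv hf hfs _
  have hcq : Continuous (qm k d) := (qm_lip k d).continuous
  calc ∫⁻ x, ‖fderiv ℝ (fun x => f (qm k d (e x))) x‖ₑ ^ p
      ≤ ∫⁻ x, ‖(e : EuclideanSpace ℝ (Fin n) →L[ℝ] WW k d)‖ₑ ^ p * ENNReal.ofReal (‖fderiv ℝ f (qm k d (e x))‖ ^ p) := lintegral_mono h1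
    _ = ‖(e : EuclideanSpace ℝ (Fin n) →L[ℝ] WW k d)‖ₑ ^ p * (c * ∫⁻ w : WW k d, ENNReal.ofReal (‖fderiv ℝ f (qm k d w)‖ ^ p)) := by
        rw [lintegral_const_mul' _ _ (ENNReal.rpow_ne_top_of_nonneg (by linarith) enorm_ne_top),
          hce (fun w => ENNReal.ofReal (‖fderiv ℝ f (qm k d w)‖ ^ p))]
    _ ≤ ‖(e : EuclideanSpace ℝ (Fin n) →L[ℝ] WW k d)‖ₑ ^ p * (c * (C * Kp p f)) := by
        gcongr
        have hm : Continuous (fun z => ‖fderiv ℝ f z‖ ^ p) := hfc.norm.rpow_const (fun _ => Or.inr (by linarith))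
        have hmq : Continuous (fun w : WW k d => ‖fderiv ℝ f (qm k d w)‖ ^ p) := hm.comp hcq
        rw [Kp, Measure.volume_eq_prod, Measure.volume_eq_prod, lintegral_prod (fun w : WW k d => ENNReal.ofReal (‖fderiv ℝ f (qm k d w)‖ ^ p)) hmq.measurable.ennreal_ofReal.aemeasurable,
          lintegral_prod _ (hm.measurable.ennreal_ofReal.aemeasurable), ← lintegral_const_mul' _ _ hC]
        refine lintegral_mono fun y => ?_
        have := hrad (fun r => ‖fderiv ℝ f (y, r - 10)‖ ^ p) (hm.comp (by fun_prop)) (fun r => by positivity) (by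
          intro r hr
          by_contra hcon
          refine hr ?_
          have : (1:ℝ) < ‖((y, r - 10) : YY k)‖ := by
            refine lt_of_lt_of_le ?_ (norm_snd_le _)
            simp only [Real.norm_eq_abs, lt_abs]
            rw [mem_Icc] at hcon
            by_cases h9 : 9 ≤ r
            · left; have := not_le.1 (fun h => hcon ⟨h9, h⟩); linarith
            · right; push Not at h9; linarith
          simp [fderiv_zero_of_loop hf this, Real.zero_rpow (by linarith : p ≠ 0)])
        refine this.trans (le_of_eq ?_)
        congr 1
        exact lintegral_sub_right_eq_self (fun r => ENNReal.ofReal (‖fderiv ℝ f (y, r)‖ ^ p)) 10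
    _ = _ := by ring

end

section
open Metric Set MeasureTheory Filter
open scoped ENNReal Topology

theorem exists_e {n k d : ℕ} (h : n = k + d) : ∃ e : EuclideanSpace ℝ (Fin n) ≃L[ℝ] WW k d, ∀ x, ‖e x‖ ≤ 15 → ‖x‖ < 1 := by
  have hfr : Module.finrank ℝ (EuclideanSpace ℝ (Fin n)) = Module.finrank ℝ (WW k d) := by
    simp [h, Module.finrank_prod]
  let e0 : EuclideanSpace ℝ (Fin n) ≃L[ℝ] WW k d := ContinuousLinearEquiv.ofFinrankEq hfr
  set K := ‖(e0.symm : WW k d →L[ℝ] EuclideanSpace ℝ (Fin n))‖ with hK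
  have hK0 : 0 ≤ K := norm_nonneg _
  have hc : (15 * (K + 1) : ℝ) ≠ 0 := by positivity
  refine ⟨e0.trans (ContinuousLinearEquiv.smulLeft (Units.mk0 _ hc)), fun x hx => ?_⟩
  have h1 : ‖x‖ ≤ K * ‖e0 x‖ := by
    have := (e0.symm : WW k d →L[ℝ] EuclideanSpace ℝ (Fin n)).le_opNorm (e0 x)
    simpa using this
  have h2 : (e0.trans (ContinuousLinearEquiv.smulLeft (Units.mk0 _ hc))) x = (15 * (K + 1)) • e0 x := rfl
  rw [h2, norm_smul, Real.norm_eq_abs, abs_of_nonneg (by positivity)] at hx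
  have h3 : (K + 1) * ‖e0 x‖ ≤ 1 := by nlinarith
  by_cases h0 : ‖e0 x‖ = 0
  · rw [h0] at h1; linarith
  · have : 0 < ‖e0 x‖ := lt_of_le_of_ne (norm_nonneg _) (Ne.symm h0)
    nlinarith

/-- the constructed boundary map -/
def uu {n k d ν : ℕ} (e : EuclideanSpace ℝ (Fin n) ≃L[ℝ] WW k d) (b : EuclideanSpace ℝ (Fin ν))
    (f f0 : YY k → EuclideanSpace ℝ (Fin ν)) (x : EuclideanSpace ℝ (Fin n)) : EuclideanSpace ℝ (Fin ν) :=
  f (qm k d (e x)) + (f0 (qm k d ((3:ℝ) • e x)) - b)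

section
variable {n k d ν : ℕ} {e : EuclideanSpace ℝ (Fin n) ≃L[ℝ] WW k d} {N : Set (EuclideanSpace ℝ (Fin ν))} {b : EuclideanSpace ℝ (Fin ν)}
    {f f0 : YY k → EuclideanSpace ℝ (Fin ν)}

theorem uu_far (hf0 : IsLoop N b f0) {x : EuclideanSpace ℝ (Fin n)} (hx : 6 ≤ ‖(e x).2‖) : uu e b f f0 x = f (qm k d (e x)) := by
  rw [uu, hf0.out (qm k d ((3:ℝ) • e x)) (qm_out (Or.inr (Or.inl ?_)))]
  · simp
  · rw [Prod.smul_snd, norm_smul]; norm_num; linarith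

theorem uu_near (hf : IsLoop N b f) {x : EuclideanSpace ℝ (Fin n)} (hx : ‖(e x).2‖ ≤ 9) : uu e b f f0 x = f0 (qm k d ((3:ℝ) • e x)) := by
  rw [uu, hf.out (qm k d (e x)) (qm_out (Or.inr (Or.inr hx)))]
  simp

theorem uu_mem (hf : IsLoop N b f) (hf0 : IsLoop N b f0) (x : EuclideanSpace ℝ (Fin n)) : uu e b f f0 x ∈ N := by
  rcases le_total ‖(e x).2‖ 9 with h | h
  · rw [uu_near hf h]; exact hf0.mem _
  · rw [uu_far hf0 (by linarith)]; exact hf.mem _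

theorem uu_smooth (hf : IsLoop N b f) (hf0 : IsLoop N b f0) (hfs : ContDiff ℝ (⊤ : ℕ∞) f) (hf0s : ContDiff ℝ (⊤ : ℕ∞) f0) :
    ContDiff ℝ (⊤ : ℕ∞) (uu e b f f0) := by
  have h1 : ContDiff ℝ (⊤ : ℕ∞) (fun x => f (qm k d (e x))) := (loop_qm_smooth (d := d) hf hfs).comp e.contDiff
  have h2 : ContDiff ℝ (⊤ : ℕ∞) (fun x => f0 (qm k d ((3:ℝ) • e x))) := (loop_qm_smooth (d := d) hf0 hf0s).comp (by fun_prop : ContDiff ℝ (⊤ : ℕ∞) fun x => (3:ℝ) • e x)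
  exact h1.add (h2.sub contDiff_const)

theorem uu_out (hE : ∀ x, ‖e x‖ ≤ 15 → ‖x‖ < 1) (hf : IsLoop N b f) (hf0 : IsLoop N b f0) {x : EuclideanSpace ℝ (Fin n)} (hx : 1 ≤ ‖x‖) :
    uu e b f f0 x = b := by
  have h : 15 < ‖e x‖ := by by_contra h; linarith [hE x (not_lt.1 h)]
  rw [Prod.norm_def, lt_max_iff] at h
  have h1 : 1 ≤ ‖qm k d (e x)‖ := by
    apply qm_out
    rcases h with h | h
    · left; linarith
    · right; left; linarith
  have h2 : 1 ≤ ‖qm k d ((3:ℝ) • e x)‖ := by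
    apply qm_out
    rw [Prod.smul_fst, Prod.smul_snd, norm_smul, norm_smul]
    norm_num
    rcases h with h | h
    · left; linarith
    · right; left; linarith
  rw [uu, hf.out _ h1, hf0.out _ h2]; simp
end

theorem ennreal_add_rpow_le {a b : ℝ≥0∞} {p : ℝ} (hp : 1 ≤ p) : (a + b) ^ p ≤ 2 ^ (p - 1) * (a ^ p + b ^ p) :=
  ENNReal.rpow_add_le_mul_rpow_add_rpow a b hp

theorem uu_energy {k d : ℕ} (hd : 1 ≤ d) {p : ℝ} (hp : 1 < p) {n : ℕ} (e : EuclideanSpace ℝ (Fin n) ≃L[ℝ] WW k d) :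
    ∃ C : ℝ≥0∞, C ≠ ⊤ ∧ ∀ {ν : ℕ} {N : Set (EuclideanSpace ℝ (Fin ν))} {b : EuclideanSpace ℝ (Fin ν)}
      {f f0 : YY k → EuclideanSpace ℝ (Fin ν)} (_ : IsLoop N b f) (_ : IsLoop N b f0) (_ : ContDiff ℝ (⊤ : ℕ∞) f) (_ : ContDiff ℝ (⊤ : ℕ∞) f0),
      ∫⁻ x, ‖fderiv ℝ (uu e b f f0) x‖ₑ ^ p ≤ C * (Kp p f + Kp p f0) := by
  have h3 : (3:ℝ) ≠ 0 := by norm_num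
  obtain ⟨C1, hC1, h1⟩ := tube_energy hd hp e
  obtain ⟨C2, hC2, h2⟩ := tube_energy hd hp (e.trans (ContinuousLinearEquiv.smulLeft (Units.mk0 _ h3)))
  refine ⟨2 ^ (p - 1) * (C1 + C2), ?_, ?_⟩
  · exact ENNReal.mul_ne_top (ENNReal.rpow_ne_top_of_nonneg (by linarith) (by simp)) (ENNReal.add_ne_top.2 ⟨hC1, hC2⟩)
  intro ν N b f f0 hf hf0 hfs hf0s
  have d1 : ContDiff ℝ (⊤ : ℕ∞) (fun x => f (qm k d (e x))) := (loop_qm_smooth (d := d) hf hfs).comp e.contDiff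
  have d2 : ContDiff ℝ (⊤ : ℕ∞) (fun x => f0 (qm k d ((3:ℝ) • e x))) := (loop_qm_smooth (d := d) hf0 hf0s).comp (by fun_prop : ContDiff ℝ (⊤ : ℕ∞) fun x => (3:ℝ) • e x)
  have hder : ∀ x, fderiv ℝ (uu e b f f0) x = fderiv ℝ (fun x => f (qm k d (e x))) x + fderiv ℝ (fun x => f0 (qm k d ((3:ℝ) • e x))) x := by
    intro x
    have ha := ((d1.differentiable (by simp)) x).hasFDerivAt
    have hb := ((d2.differentiable (by simp)) x).hasFDerivAt
    exact (ha.add (hb.sub_const b)).fderiv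
  have hcm : Measurable (fun x => ‖fderiv ℝ (fun x => f (qm k d (e x))) x‖ₑ ^ p) :=
    ((d1.continuous_fderiv (by simp)).measurable.enorm).pow_const p
  calc ∫⁻ x, ‖fderiv ℝ (uu e b f f0) x‖ₑ ^ p
      ≤ ∫⁻ x, 2 ^ (p - 1) * (‖fderiv ℝ (fun x => f (qm k d (e x))) x‖ₑ ^ p + ‖fderiv ℝ (fun x => f0 (qm k d ((3:ℝ) • e x))) x‖ₑ ^ p) := by
        refine lintegral_mono fun x => ?_
        refine le_trans ?_ (ennreal_add_rpow_le hp.le)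
        rw [hder]
        refine ENNReal.rpow_le_rpow ?_ (by linarith)
        rw [← ofReal_norm, ← ofReal_norm, ← ofReal_norm, ← ENNReal.ofReal_add (norm_nonneg _) (norm_nonneg _)]
        exact ENNReal.ofReal_le_ofReal (norm_add_le _ _)
    _ = 2 ^ (p - 1) * ((∫⁻ x, ‖fderiv ℝ (fun x => f (qm k d (e x))) x‖ₑ ^ p) + ∫⁻ x, ‖fderiv ℝ (fun x => f0 (qm k d ((3:ℝ) • e x))) x‖ₑ ^ p) := by
        rw [lintegral_const_mul' _ _ (ENNReal.rpow_ne_top_of_nonneg (by linarith) (by simp)), lintegral_add_left hcm]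
    _ ≤ 2 ^ (p - 1) * (C1 * Kp p f + C2 * Kp p f0) := by
        gcongr
        · exact h1 hf hfs
        · exact h2 hf0 hf0s
    _ ≤ 2 ^ (p - 1) * ((C1 + C2) * Kp p f + (C1 + C2) * Kp p f0) := by
        gcongr
        · exact le_self_add
        · exact le_add_self
    _ = _ := by ring

theorem uu_gag {k d : ℕ} (hd : 1 ≤ d) {p : ℝ} (hp : 1 < p) {n : ℕ} (hn : 1 ≤ n) (e : EuclideanSpace ℝ (Fin n) ≃L[ℝ] WW k d)
    {ν : ℕ} {N : Set (EuclideanSpace ℝ (Fin ν))} (hN : IsCompact N) {b : EuclideanSpace ℝ (Fin ν)}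
    {f0 : YY k → EuclideanSpace ℝ (Fin ν)} (hf0 : IsLoop N b f0) (hf0s : ContDiff ℝ (⊤ : ℕ∞) f0) :
    ∃ C : ℝ≥0∞, C ≠ ⊤ ∧ ∀ {f : YY k → EuclideanSpace ℝ (Fin ν)} (_ : IsLoop N b f) (_ : ContDiff ℝ (⊤ : ℕ∞) f),
      gagliardoE (1 - 1/p) p (ball 0 1) (uu e b f f0) ≤ C * (1 + Kp p f) ^ (1 - 1/p) := by
  obtain ⟨C0, hC0, hG⟩ := gag_upper n hn ν hp (diam N) diam_nonneg
  obtain ⟨C1, hC1, hU⟩ := uu_energy hd hp e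
  have hp1 : 0 ≤ 1 - 1/p := by
    rw [sub_nonneg, div_le_one (by linarith)]; exact hp.le
  have hK0 : Kp p f0 ≠ ⊤ := Kp_finite hf0 hf0s (by linarith)
  refine ⟨C0 * (1 + C1 * (1 + Kp p f0)) ^ (1 - 1/p), ?_, ?_⟩
  · refine ENNReal.mul_ne_top hC0 (ENNReal.rpow_ne_top_of_nonneg hp1 ?_)
    finiteness
  intro f hf hfs
  have hK : Kp p f ≠ ⊤ := Kp_finite hf hfs (by linarith)
  have hle := hU hf hf0 hfs hf0s
  refine (hG (uu e b f f0) ((uu_smooth hf hf0 hfs hf0s).of_le (by exact_mod_cast le_top)) ?_ ?_).trans ?_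
  · intro x y
    rw [← dist_eq_norm]
    exact dist_le_diam_of_mem hN.isBounded (uu_mem hf hf0 y) (uu_mem hf hf0 x)
  · exact ne_top_of_le_ne_top (by finiteness) hle
  · rw [mul_assoc, ← ENNReal.mul_rpow_of_nonneg _ _ hp1]
    gcongr
    refine (add_le_add_right hle 1).trans ?_
    calc 1 + C1 * (Kp p f + Kp p f0) ≤ 1 + C1 * (Kp p f + Kp p f0) + (C1 + C1 * Kp p f * Kp p f0 + Kp p f) := le_self_add
      _ = _ := by ring

theorem uu_liminf {k d : ℕ} (hd : 1 ≤ d) {p : ℝ} (hp : 1 < p) {n : ℕ} (hn : 1 ≤ n) (e : EuclideanSpace ℝ (Fin n) ≃L[ℝ] WW k d)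
    (hE : ∀ x, ‖e x‖ ≤ 15 → ‖x‖ < 1)
    {ν : ℕ} {N : Set (EuclideanSpace ℝ (Fin ν))} {b : EuclideanSpace ℝ (Fin ν)}
    {f0 : YY k → EuclideanSpace ℝ (Fin ν)} (hf0 : IsLoop N b f0) (hf0s : ContDiff ℝ (⊤ : ℕ∞) f0) {z0 : YY k} (hz0 : f0 z0 ≠ b) :
    ∃ c : ℝ≥0∞, 0 < c ∧ ∀ {f : YY k → EuclideanSpace ℝ (Fin ν)} (_ : IsLoop N b f),
      c ≤ gagliardoE (1 - 1/p) p (ball 0 1) (uu e b f f0) := by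
  have hz1 : ‖z0‖ < 1 := by by_contra h; exact hz0 (hf0.out _ (not_lt.1 h))
  have hz11 : ‖z0.1‖ < 1 := (norm_fst_le z0).trans_lt hz1
  have hz12 : |z0.2| < 1 := (norm_snd_le z0).trans_lt hz1
  rw [abs_lt] at hz12
  let w : EuclideanSpace ℝ (Fin n) → EuclideanSpace ℝ (Fin ν) := fun x => f0 (qm k d ((3:ℝ) • e x))
  have hwc : Continuous w := by
    have : Continuous (fun x => qm k d ((3:ℝ) • e x)) := (qm_lip k d).continuous.comp (by fun_prop)
    exact hf0.cont.comp this
  let θ : EuclideanSpace ℝ (Fin d) := EuclideanSpace.single ⟨0, hd⟩ 1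
  have hθ : ‖θ‖ = 1 := by simp [θ]
  set W0 : WW k d := (z0.1, (10 + z0.2) • θ) with hW0
  have hW01 : ‖W0.1‖ < 1 := hz11
  have hW02 : ‖W0.2‖ = 10 + z0.2 := by simp only [hW0]; rw [norm_smul, hθ, Real.norm_eq_abs, abs_of_pos (by linarith)]; ring
  set x0 := e.symm ((3:ℝ)⁻¹ • W0) with hx0
  have hex0 : e x0 = (3:ℝ)⁻¹ • W0 := by simp [hx0]
  have hwx0 : w x0 = f0 z0 := by
    simp only [w, hex0]
    rw [smul_smul]; norm_num
    congr 1
    simp only [qm, hW02]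
    ext <;> simp [hW0]
  have hw0 : w 0 = b := by
    simp only [w, map_zero, smul_zero]
    exact hf0.out _ (qm_out (Or.inr (Or.inr (by simp))))
  set r := ‖f0 z0 - b‖ with hr
  have hrpos : 0 < r := norm_pos_iff.2 (sub_ne_zero.2 hz0)
  let D : Set (EuclideanSpace ℝ (Fin n)) := {x | ‖(e x).2‖ < 9} ∩ ball 0 1
  have hD : IsOpen D := (isOpen_lt (by fun_prop) continuous_const).inter isOpen_ball
  let S := D ∩ {x | dist (w x) (f0 z0) < r / 3}
  let T := D ∩ {x | dist (w x) b < r / 3}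
  have hS : IsOpen S := hD.inter (isOpen_lt (by fun_prop) continuous_const)
  have hT : IsOpen T := hD.inter (isOpen_lt (by fun_prop) continuous_const)
  have hx0D : x0 ∈ D := by
    refine ⟨?_, ?_⟩
    · change ‖(e x0).2‖ < 9
      rw [hex0, Prod.smul_snd, norm_smul, hW02]; norm_num; linarith
    · rw [mem_ball_zero_iff]
      apply hE
      rw [hex0, norm_smul, Prod.norm_def, hW02]
      have : max ‖W0.1‖ (10 + z0.2) ≤ 11 := max_le (by linarith) (by linarith)
      norm_num; linarith
  have hSn : S.Nonempty := ⟨x0, hx0D, by simp [hwx0, hrpos]⟩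
  have hTn : T.Nonempty := ⟨0, ⟨by simp, by simp⟩, by simp [hw0, hrpos]⟩
  have hSp : 0 < volume S := hS.measure_pos _ hSn
  have hTp : 0 < volume T := hT.measure_pos _ hTn
  set a := (n : ℝ) + (1 - 1/p) * p with ha
  have hapos : 0 ≤ a := by
    have : (1 - 1/p) * p = p - 1 := by field_simp
    rw [ha, this]
    have : (0:ℝ) ≤ n := Nat.cast_nonneg n
    linarith
  refine ⟨ENNReal.ofReal ((r/3) ^ p / 2 ^ a) * volume T * volume S, ?_, ?_⟩
  · have : 0 < ENNReal.ofReal ((r/3) ^ p / 2 ^ a) := ENNReal.ofReal_pos.2 (by positivity)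
    positivity
  intro f hf
  have huw : ∀ x ∈ D, uu e b f f0 x = w x := fun x hx => uu_near hf (le_of_lt hx.1)
  rw [gagliardoE]
  have hSD : S ⊆ ball 0 1 := fun x hx => hx.1.2
  have hTD : T ⊆ ball 0 1 := fun x hx => hx.1.2
  calc ENNReal.ofReal ((r/3) ^ p / 2 ^ a) * volume T * volume S = ∫⁻ x in S, ∫⁻ y in T, ENNReal.ofReal ((r/3) ^ p / 2 ^ a) := by simp
    _ ≤ ∫⁻ x in S, ∫⁻ y in T, ENNReal.ofReal (‖uu e b f f0 y - uu e b f f0 x‖ ^ p / ‖y - x‖ ^ a) := by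
        refine setLIntegral_mono' hS.measurableSet fun x hx => setLIntegral_mono' hT.measurableSet fun y hy => ENNReal.ofReal_le_ofReal ?_
        rw [huw x hx.1, huw y hy.1]
        have h1 : dist (w x) (f0 z0) < r / 3 := hx.2
        have h2 : dist (w y) b < r / 3 := hy.2
        have h3 : r / 3 ≤ ‖w y - w x‖ := by
          have : r = dist (f0 z0) b := by rw [dist_eq_norm]
          have t1 := dist_triangle4 (f0 z0) (w x) (w y) b
          rw [dist_comm] at h1
          rw [← dist_eq_norm, dist_comm]
          linarith
        have h4 : ‖y - x‖ ≤ 2 := by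
          have := norm_sub_le y x
          have h5 := mem_ball_zero_iff.1 (hSD hx)
          have h6 := mem_ball_zero_iff.1 (hTD hy)
          linarith
        have h5 : 0 < ‖y - x‖ := by
          rw [norm_pos_iff, sub_ne_zero]
          rintro rfl
          simp at h3; linarith
        gcongr
    _ ≤ ∫⁻ x in ball 0 1, ∫⁻ y in T, ENNReal.ofReal (‖uu e b f f0 y - uu e b f f0 x‖ ^ p / ‖y - x‖ ^ a) := lintegral_mono_set hSD
    _ ≤ _ := lintegral_mono fun x => lintegral_mono_set hTD

end

section
open Metric Set MeasureTheory Filter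
open scoped ENNReal Topology NNReal

/-- smoothed positive part -/
def th1 (s : ℝ) : ℝ := s * Real.smoothTransition s

theorem th1_contDiff : ContDiff ℝ (⊤ : ℕ∞) th1 := contDiff_id.mul Real.smoothTransition.contDiff

theorem th1_lip : ∃ L : ℝ≥0, LipschitzWith L th1 := by
  have hc : Continuous (deriv th1) := th1_contDiff.continuous_deriv (by exact_mod_cast le_top)
  obtain ⟨B, hB⟩ := (isCompact_Icc (a := (0:ℝ)) (b := 1)).exists_bound_of_continuousOn hc.continuousOn
  refine ⟨Real.toNNReal (max B 1), ?_⟩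
  refine lipschitzWith_of_nnnorm_deriv_le (th1_contDiff.differentiable (by simp)) fun x => ?_
  rw [← NNReal.coe_le_coe, coe_nnnorm, Real.coe_toNNReal _ (le_max_of_le_right zero_le_one)]
  rcases lt_or_ge x 0 with h | h
  · have : th1 =ᶠ[𝓝 x] fun _ => 0 := by
      filter_upwards [gt_mem_nhds h] with y hy
      simp [th1, Real.smoothTransition.zero_of_nonpos hy.le]
    rw [this.deriv_eq]; simp
  · rcases le_or_gt x 1 with h1 | h1
    · exact (hB x ⟨h, h1⟩).trans (le_max_left _ _)
    · have : th1 =ᶠ[𝓝 x] fun y => y := by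
        filter_upwards [lt_mem_nhds h1] with y hy
        simp [th1, Real.smoothTransition.one_of_one_le (le_of_lt hy)]
      rw [this.deriv_eq]; simp

/-- rescaled smoothed positive part -/
def the (ε s : ℝ) : ℝ := ε * th1 (ε⁻¹ * s)

theorem the_contDiff (ε : ℝ) : ContDiff ℝ (⊤ : ℕ∞) (the ε) := contDiff_const.mul (th1_contDiff.comp (contDiff_const.mul contDiff_id))

theorem the_lip {L : ℝ≥0} (hL : LipschitzWith L th1) {ε : ℝ} (hε : 0 < ε) : LipschitzWith L (the ε) := by
  refine LipschitzWith.of_dist_le_mul fun x y => ?_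
  have h := hL.dist_le_mul (ε⁻¹ * x) (ε⁻¹ * y)
  have h2 : dist (ε⁻¹ * x) (ε⁻¹ * y) = ε⁻¹ * |x - y| := by
    rw [Real.dist_eq, ← mul_sub, abs_mul, abs_of_pos (inv_pos.2 hε)]
  rw [h2] at h
  · rw [Real.dist_eq, the, the, ← mul_sub, abs_mul, abs_of_pos hε, ← Real.dist_eq]
    calc ε * dist (th1 (ε⁻¹ * x)) (th1 (ε⁻¹ * y)) ≤ ε * (L * (ε⁻¹ * |x - y|)) := by
          gcongr
      _ = L * dist x y := by rw [Real.dist_eq]; field_simp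

theorem the_nonpos {ε : ℝ} (hε : 0 < ε) {s : ℝ} (hs : s ≤ 0) : the ε s = 0 := by
  have : ε⁻¹ * s ≤ 0 := mul_nonpos_of_nonneg_of_nonpos (inv_pos.2 hε).le hs
  simp [the, th1, Real.smoothTransition.zero_of_nonpos this]

theorem the_of_ge {ε : ℝ} (hε : 0 < ε) {s : ℝ} (hs : ε ≤ s) : the ε s = s := by
  have : 1 ≤ ε⁻¹ * s := by rw [inv_mul_eq_div, le_div_iff₀ hε]; linarith
  rw [the, th1, Real.smoothTransition.one_of_one_le this]; field_simp

theorem the_mem {ε : ℝ} (hε : 0 < ε) {s : ℝ} (hs1 : s ≤ 1) : the ε s ∈ Icc (0:ℝ) 1 := by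
  rcases le_total s 0 with h | h
  · rw [the_nonpos hε h]; simp
  · have h1 := Real.smoothTransition.nonneg (ε⁻¹ * s)
    have h2 := Real.smoothTransition.le_one (ε⁻¹ * s)
    have : the ε s = s * Real.smoothTransition (ε⁻¹ * s) := by rw [the, th1]; field_simp
    rw [this]
    exact ⟨mul_nonneg h h1, by nlinarith⟩

/-- the affine slices -/
def jm {k d : ℕ} (θ y : EuclideanSpace ℝ (Fin d)) (x : YY k) : WW k d := ((4:ℝ) • x.1, (10 + 4 * x.2) • θ + y)

section
variable {k d : ℕ} {θ y : EuclideanSpace ℝ (Fin d)} {x : YY k}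

theorem jm_bounds (hθ : ‖θ‖ = 1) (hy : ‖y‖ ≤ 1) (hx : ‖x‖ < 3/4) : ‖jm θ y x‖ ≤ 15 ∧ 6 ≤ ‖(jm θ y x).2‖ := by
  have h1 : ‖x.1‖ < 3/4 := (norm_fst_le x).trans_lt hx
  have h2 : |x.2| < 3/4 := (norm_snd_le x).trans_lt hx
  rw [abs_lt] at h2
  have h3 : ‖(10 + 4 * x.2) • θ‖ = 10 + 4 * x.2 := by rw [norm_smul, hθ, Real.norm_eq_abs, abs_of_pos (by linarith)]; ring
  refine ⟨?_, ?_⟩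
  · rw [Prod.norm_def]
    refine max_le ?_ ?_
    · simp only [jm, norm_smul]; norm_num; linarith
    · simp only [jm]; have := norm_add_le ((10 + 4 * x.2) • θ) y; linarith
  · simp only [jm]; have := norm_sub_le_norm_add ((10 + 4 * x.2) • θ) y; linarith

theorem jm_out (hθ : ‖θ‖ = 1) (hy : ‖y‖ ≤ 1) (hx1 : 1/2 ≤ ‖x‖) (hx : ‖x‖ < 3/4) : 1 ≤ ‖qm k d (jm θ y x)‖ := by
  have h2 : |x.2| < 3/4 := (norm_snd_le x).trans_lt hx
  rw [abs_lt] at h2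
  have h3 : ‖(10 + 4 * x.2) • θ‖ = 10 + 4 * x.2 := by rw [norm_smul, hθ, Real.norm_eq_abs, abs_of_pos (by linarith)]; ring
  apply qm_out
  simp only [jm]
  rw [Prod.norm_def, le_max_iff] at hx1
  rcases hx1 with h | h
  · left; rw [norm_smul]; norm_num; linarith
  · right
    rw [Real.norm_eq_abs, le_abs] at h
    rcases h with h | h
    · left; have := norm_sub_le_norm_add ((10 + 4 * x.2) • θ) y; linarith
    · right; have := norm_add_le ((10 + 4 * x.2) • θ) y; linarith

theorem jm_lip (hθ : ‖θ‖ = 1) : LipschitzWith 4 (jm (k := k) θ y) := by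
  refine LipschitzWith.of_dist_le_mul fun a c => ?_
  rw [dist_eq_norm, dist_eq_norm]
  have : jm θ y a - jm θ y c = ((4:ℝ) • (a - c).1, (4 * (a - c).2) • θ) := by
    ext
    · simp [jm]; ring
    · simp [jm]; ring
  rw [this, Prod.norm_def]
  have h1 := norm_fst_le (a - c)
  have h2 := norm_snd_le (a - c)
  refine max_le ?_ ?_
  · rw [norm_smul]; norm_num; simpa using h1
  · rw [norm_smul, hθ]
    simp only [norm_mul]
    norm_num; simpa using h2

theorem jm_contDiff : ContDiff ℝ (⊤ : ℕ∞) (jm (k := k) θ y) := by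
  unfold jm
  fun_prop

theorem jm_zero (hθ : ‖θ‖ = 1) (hx : ‖x‖ < 3/4) : qm k d (jm θ 0 x) = (4:ℝ) • x := by
  have h2 : |x.2| < 3/4 := (norm_snd_le x).trans_lt hx
  rw [abs_lt] at h2
  have h3 : ‖(10 + 4 * x.2) • θ‖ = 10 + 4 * x.2 := by rw [norm_smul, hθ, Real.norm_eq_abs, abs_of_pos (by linarith)]; ring
  simp only [qm, jm, add_zero, h3]
  ext <;> simp
end

/-- cutoff -/
def cut {k ν : ℕ} (b : EuclideanSpace ℝ (Fin ν)) (g : YY k → EuclideanSpace ℝ (Fin ν)) (x : YY k) : EuclideanSpace ℝ (Fin ν) :=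
  if ‖x‖ < 3/4 then g x else b

theorem cut_homotopy {k ν : ℕ} {N : Set (EuclideanSpace ℝ (Fin ν))} {b : EuclideanSpace ℝ (Fin ν)} (hb : b ∈ N)
    (Φ : ℝ → YY k → EuclideanSpace ℝ (Fin ν))
    (hc : ContinuousOn (fun q : ℝ × YY k => Φ q.1 q.2) (Icc 0 1 ×ˢ ball 0 (3/4)))
    (hN : ∀ s ∈ Icc (0:ℝ) 1, ∀ x, ‖x‖ < 3/4 → Φ s x ∈ N)
    (ho : ∀ s ∈ Icc (0:ℝ) 1, ∀ x, 5/8 ≤ ‖x‖ → ‖x‖ < 3/4 → Φ s x = b) :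
    ∃ (h0 : IsLoop N b (cut b (Φ 0))) (h1 : IsLoop N b (cut b (Φ 1))), cls hb h0 = cls hb h1 := by
  have hC : ContinuousOn (fun q : ℝ × YY k => cut b (Φ q.1) q.2) (Icc 0 1 ×ˢ univ) := by
    rintro ⟨s, x⟩ ⟨hs, -⟩
    rcases lt_or_ge ‖x‖ (3/4) with h | h
    · have h1 := hc (s, x) ⟨hs, by simpa using h⟩
      have hn : {q : ℝ × YY k | ‖q.2‖ < 3/4} ∈ 𝓝 (s, x) := (isOpen_lt (by fun_prop) continuous_const).mem_nhds h
      have h2 : ContinuousWithinAt (fun q : ℝ × YY k => Φ q.1 q.2) (Icc 0 1 ×ˢ univ) (s, x) := by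
        refine h1.mono_of_mem_nhdsWithin ?_
        filter_upwards [nhdsWithin_le_nhds hn, self_mem_nhdsWithin] with q hq hq2
        exact ⟨hq2.1, by simpa using hq⟩
      refine h2.congr_of_eventuallyEq ?_ (by simp [cut, h])
      filter_upwards [nhdsWithin_le_nhds hn] with q hq
      have hq' : ‖q.2‖ < 3/4 := hq
      simp [cut, hq']
    · have hn : {q : ℝ × YY k | 5/8 < ‖q.2‖} ∈ 𝓝 (s, x) := (isOpen_lt continuous_const (by fun_prop)).mem_nhds (by change 5/8 < ‖x‖; linarith)
      refine (continuousWithinAt_const (b := b)).congr_of_eventuallyEq ?_ (by simp [cut, not_lt.2 h])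
      filter_upwards [nhdsWithin_le_nhds hn, self_mem_nhdsWithin] with q hq hq2
      simp only [cut]
      split_ifs with h3
      · exact ho _ hq2.1 _ (le_of_lt hq) h3
      · rfl
  have hm : ∀ s ∈ Icc (0:ℝ) 1, ∀ x, cut b (Φ s) x ∈ N := by
    intro s hs x
    simp only [cut]; split_ifs with h
    · exact hN s hs x h
    · exact hb
  have hout : ∀ s ∈ Icc (0:ℝ) 1, ∀ x, 1 ≤ ‖x‖ → cut b (Φ s) x = b := by
    intro s hs x hx
    simp only [cut]; rw [if_neg]; linarith
  have hl : ∀ s ∈ Icc (0:ℝ) 1, IsLoop N b (cut b (Φ s)) := by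
    intro s hs
    refine ⟨?_, hm s hs, hout s hs⟩
    rw [← continuousOn_univ]
    exact hC.comp (f := fun x => (s, x)) (by fun_prop) (fun x _ => ⟨hs, mem_univ _⟩)
  have z0 : (0:ℝ) ∈ Icc (0:ℝ) 1 := by simp
  have z1 : (1:ℝ) ∈ Icc (0:ℝ) 1 := by simp
  refine ⟨hl 0 z0, hl 1 z1, ?_⟩
  exact cls_eq hb (hl 0 z0) (hl 1 z1) (fun q => cut b (Φ q.1) q.2) hC hm hout (fun x => rfl) (fun x => rfl)

end

section
open Metric Set MeasureTheory Filter
open scoped ENNReal Topology NNReal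

theorem cls_congr {ν k : ℕ} {N : Set (EuclideanSpace ℝ (Fin ν))} {b : EuclideanSpace ℝ (Fin ν)} (hb : b ∈ N)
    {f g : YY k → EuclideanSpace ℝ (Fin ν)} (hf : IsLoop N b f) (hg : IsLoop N b g) (h : f = g) : cls hb hf = cls hb hg := by
  subst h; rfl

theorem slice_map {n k d ν : ℕ} {e : EuclideanSpace ℝ (Fin n) ≃L[ℝ] WW k d} (hE : ∀ x, ‖e x‖ ≤ 15 → ‖x‖ < 1)
    {N : Set (EuclideanSpace ℝ (Fin ν))} {b : EuclideanSpace ℝ (Fin ν)} (hb : b ∈ N)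
    {θ y : EuclideanSpace ℝ (Fin d)} (hθ : ‖θ‖ = 1) (hy : ‖y‖ ≤ 1)
    {f : YY k → EuclideanSpace ℝ (Fin ν)} (hf : IsLoop N b f)
    {u : EuclideanSpace ℝ (Fin n) → EuclideanSpace ℝ (Fin ν)} (hu : ∀ x, 6 ≤ ‖(e x).2‖ → u x = f (qm k d (e x)))
    {U : EuclideanSpace ℝ (Fin n) × ℝ → EuclideanSpace ℝ (Fin ν)}
    (hU1 : C1OnNhd U (closedBall 0 1 ×ˢ Icc (0 : ℝ) 1)) (hUN : MapsTo U (closedBall 0 1 ×ˢ Icc (0 : ℝ) 1) N)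
    (hU0 : ∀ x ∈ closedBall (0 : EuclideanSpace ℝ (Fin n)) 1, U (x, 0) = u x)
    {ψ : YY k → ℝ} (hψs : ContDiff ℝ (⊤ : ℕ∞) ψ) (hψ0 : ∀ x, 0 ≤ ψ x)
    (hψh : ∀ x, ‖x‖ ≤ 1/2 → ψ x = 0) (hψ1 : ∀ x, 5/8 ≤ ‖x‖ → ψ x = 1)
    {t : ℝ} (ht : t ∈ Ioo (1/2:ℝ) 1) {ε : ℝ} (hε : 0 < ε) {K : ℝ≥0}
    (hK : LipschitzWith K (fun x : YY k => (e.symm (jm θ y x), the ε (t - ψ x)))) :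
    ∃ (w : YY k → EuclideanSpace ℝ (Fin ν)) (hw : IsLoop N b w), (∀ x, 3/4 ≤ ‖x‖ → w x = b) ∧ ContDiff ℝ 1 w ∧
      cls hb hw = cls hb hf ∧
      ∀ x, fderiv ℝ w x = 0 ∨ (‖x‖ < 3/4 ∧ ψ x ≤ t ∧
        ‖fderiv ℝ w x‖ ≤ ‖fderiv ℝ U (e.symm (jm θ y x), the ε (t - ψ x))‖ * K) := by
  set Z : YY k → EuclideanSpace ℝ (Fin n) × ℝ := fun x => (e.symm (jm θ y x), the ε (t - ψ x)) with hZ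
  have hZs : ContDiff ℝ (⊤ : ℕ∞) Z := (e.symm.contDiff.comp jm_contDiff).prodMk ((the_contDiff ε).comp (contDiff_const.sub hψs))
  have hball : ∀ {x : YY k}, ‖x‖ < 3/4 → e.symm (jm θ y x) ∈ closedBall (0 : EuclideanSpace ℝ (Fin n)) 1 := by
    intro x hx
    rw [mem_closedBall_zero_iff]
    refine (hE _ ?_).le
    simpa using (jm_bounds hθ hy hx).1
  have hthe : ∀ x, the ε (t - ψ x) ∈ Icc (0:ℝ) 1 := fun x => the_mem hε (by linarith [ht.2, hψ0 x])
  have hZm : ∀ {x : YY k}, ‖x‖ < 3/4 → Z x ∈ closedBall (0 : EuclideanSpace ℝ (Fin n)) 1 ×ˢ Icc (0 : ℝ) 1 :=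
    fun hx => ⟨hball hx, hthe _⟩
  have hbot : ∀ {x : YY k}, ‖x‖ < 3/4 → U (e.symm (jm θ y x), 0) = f (qm k d (jm θ y x)) := by
    intro x hx
    rw [hU0 _ (hball hx), hu _ (by simpa using (jm_bounds hθ hy hx).2)]
    simp
  have hUc : ∀ z ∈ closedBall (0 : EuclideanSpace ℝ (Fin n)) 1 ×ˢ Icc (0 : ℝ) 1, ContDiffAt ℝ 1 U z := by
    obtain ⟨V, hV, hsub, hVU⟩ := hU1
    intro z hz
    exact hVU.contDiffAt (hV.mem_nhds (hsub hz))
  -- homotopies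
  obtain ⟨h20, h21, h2e⟩ := cut_homotopy (k := k) hb (fun s x => f (qm k d (jm θ (s • y) x))) (by
      have hq : Continuous (fun q : ℝ × YY k => qm k d (jm θ (q.1 • y) q.2)) :=
        (qm_lip k d).continuous.comp (by unfold jm; fun_prop)
      exact (hf.cont.comp hq).continuousOn) (fun s _ x _ => hf.mem _) (by
      intro s hs x h1 h2
      refine hf.out _ (jm_out hθ ?_ (by linarith) h2)
      rw [norm_smul, Real.norm_eq_abs, abs_of_nonneg hs.1]
      nlinarith [hs.2, norm_nonneg y, hs.1])
  have hsc : ∀ s ∈ Icc (0:ℝ) 1, ∀ x, s * the ε (t - ψ x) ∈ Icc (0:ℝ) 1 := by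
    intro s hs x
    have h := hthe x
    exact ⟨mul_nonneg hs.1 h.1, mul_le_one₀ hs.2 h.1 h.2⟩
  obtain ⟨h30, h31, h3e⟩ := cut_homotopy (k := k) hb (fun s x => U (e.symm (jm θ y x), s * the ε (t - ψ x))) (by
      have hcU : ContinuousOn U (closedBall (0 : EuclideanSpace ℝ (Fin n)) 1 ×ˢ Icc (0 : ℝ) 1) :=
        fun z hz => (hUc z hz).continuousAt.continuousWithinAt
      have c1 : Continuous (jm (k := k) θ y) := jm_contDiff.continuous
      have c2 : Continuous (the ε) := (the_contDiff ε).continuous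
      have c3 : Continuous ψ := hψs.continuous
      refine hcU.comp (f := fun q : ℝ × YY k => (e.symm (jm θ y q.2), q.1 * the ε (t - ψ q.2))) (Continuous.continuousOn (by fun_prop)) ?_
      rintro ⟨s, x⟩ ⟨hs, hx⟩
      exact ⟨hball (by simpa using hx), hsc s hs x⟩) (by
      intro s hs x hx
      exact hUN ⟨hball hx, hsc s hs x⟩) (by
      intro s hs x h1 h2
      rw [hψ1 x h1, the_nonpos hε (by linarith [ht.2]), mul_zero, hbot h2]
      exact hf.out _ (jm_out hθ hy (by linarith) h2))
  simp only [one_mul] at h31 h3e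
  have hloop4 : IsLoop N b (fun x => f ((4:ℝ) • x)) := by
    refine ⟨hf.cont.comp (by fun_prop), fun x => hf.mem _, fun x hx => hf.out _ ?_⟩
    rw [norm_smul]; norm_num; linarith
  have e1 : cls hb hf = cls hb hloop4 := by
    refine cls_eq hb hf hloop4 (fun q => f ((1 + 3 * q.1) • q.2)) (hf.cont.comp (by fun_prop)).continuousOn (fun s _ x => hf.mem _) ?_ ?_ ?_
    · intro s hs x hx
      refine hf.out _ ?_
      rw [norm_smul, Real.norm_eq_abs, abs_of_nonneg (by linarith [hs.1])]
      nlinarith [hs.1]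
    · intro x; simp
    · intro x; norm_num
  have e2 : cls hb hloop4 = cls hb h20 := by
    refine cls_congr hb _ _ (funext fun x => ?_)
    simp only [cut, zero_smul]
    split_ifs with h
    · rw [jm_zero hθ h]
    · refine hf.out _ ?_
      rw [norm_smul]; norm_num; linarith
  have e3 : cls hb h21 = cls hb h30 := by
    refine cls_congr hb _ _ (funext fun x => ?_)
    simp only [cut, one_smul, zero_mul]
    split_ifs with h
    · rw [hbot h]
    · rfl
  have wlt : ∀ {x : YY k}, ‖x‖ < 3/4 → cut b (fun x => U (e.symm (jm θ y x), the ε (t - ψ x))) =ᶠ[𝓝 x] U ∘ Z := by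
    intro x hx
    filter_upwards [(isOpen_lt continuous_norm continuous_const).mem_nhds hx] with x' hx'
    have hx2 : ‖x'‖ < 3/4 := hx'
    simp [cut, hx2, hZ]
  have wconst : ∀ {x : YY k}, t < ψ x → cut b (fun x => U (e.symm (jm θ y x), the ε (t - ψ x))) =ᶠ[𝓝 x] fun _ => b := by
    intro x hx
    filter_upwards [(isOpen_lt continuous_const hψs.continuous).mem_nhds hx] with x' hx'
    have hx2 : t < ψ x' := hx'
    simp only [cut]
    split_ifs with h
    · rw [the_nonpos hε (by linarith), hbot h]
      refine hf.out _ (jm_out hθ hy ?_ h)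
      by_contra hc
      rw [hψh x' (by linarith)] at hx2
      linarith [ht.1]
    · rfl
  refine ⟨_, h31, ?_, ?_, ?_, ?_⟩
  · intro x hx
    simp [cut, not_lt.2 hx]
  · rw [contDiff_iff_contDiffAt]
    intro x
    rcases lt_or_ge ‖x‖ (3/4) with h | h
    · refine ContDiffAt.congr_of_eventuallyEq ?_ (wlt h)
      exact (hUc _ (hZm h)).comp x (hZs.contDiffAt.of_le (by exact_mod_cast le_top))
    · refine contDiffAt_const.congr_of_eventuallyEq (wconst ?_)
      rw [hψ1 x (by linarith)]; exact ht.2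
  · rw [e1, e2, h2e, e3, h3e]
  · intro x
    rcases lt_or_ge t (ψ x) with h | h
    · left; rw [(wconst h).fderiv_eq]; simp
    · right
      have hx : ‖x‖ < 3/4 := by
        by_contra hc
        rw [hψ1 x (by linarith)] at h; linarith [ht.2]
      refine ⟨hx, h, ?_⟩
      rw [(wlt hx).fderiv_eq, fderiv_comp x ((hUc _ (hZm hx)).differentiableAt (by simp)) (hZs.differentiable (by simp) x)]
      refine (ContinuousLinearMap.opNorm_comp_le _ _).trans ?_
      gcongr
      exact norm_fderiv_le_of_lipschitz ℝ hK

end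

section
open Metric Set MeasureTheory Filter
open scoped ENNReal Topology NNReal

theorem slice_avg {n k d : ℕ} (e : EuclideanSpace ℝ (Fin n) ≃L[ℝ] WW k d) (θ : EuclideanSpace ℝ (Fin d)) :
    ∃ C : ℝ≥0∞, C ≠ ⊤ ∧ ∀ (ψ : YY k → ℝ) (_ : Continuous ψ) (G : EuclideanSpace ℝ (Fin n) × ℝ → ℝ≥0∞) (_ : Measurable G),
      ∫⁻ q : EuclideanSpace ℝ (Fin d) × ℝ, ∫⁻ x in ball (0 : YY k) (3/4), G (e.symm (jm θ q.1 x), q.2 - ψ x) ≤ C * ∫⁻ z, G z := by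
  have h4 : (4:ℝ) ≠ 0 := by norm_num
  obtain ⟨c, hc, hce⟩ := lintegral_comp_equiv
    (((ContinuousLinearEquiv.smulLeft (Units.mk0 _ h4) : (Fin k → ℝ) ≃L[ℝ] (Fin k → ℝ)).prodCongr
      (ContinuousLinearEquiv.refl ℝ (EuclideanSpace ℝ (Fin d)))).trans e.symm)
  refine ⟨c * 2, by finiteness, fun ψ hψ G hG => ?_⟩
  have cj : Continuous (fun r : (EuclideanSpace ℝ (Fin d) × ℝ) × YY k => jm θ r.1.1 r.2) := by unfold jm; fun_prop
  have hm : Measurable (fun r : (EuclideanSpace ℝ (Fin d) × ℝ) × YY k => G (e.symm (jm θ r.1.1 r.2), r.1.2 - ψ r.2)) :=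
    hG.comp (Continuous.measurable (by fun_prop))
  set h : WW k d → ℝ≥0∞ := fun w => ∫⁻ τ, G (e.symm w, τ) with hh
  have hhm : Measurable h := by
    have : Measurable (fun r : WW k d × ℝ => G (e.symm r.1, r.2)) := hG.comp (Continuous.measurable (by fun_prop))
    exact this.lintegral_prod_right'
  set φ : (Fin k → ℝ) → ℝ≥0∞ := fun c => ∫⁻ a, h ((4:ℝ) • c, a) with hφ
  have hpm : Measurable (fun w : WW k d => h ((4:ℝ) • w.1, w.2)) := hhm.comp (Continuous.measurable (by fun_prop))
  have hφm : Measurable φ := hpm.lintegral_prod_right'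
  calc ∫⁻ q : EuclideanSpace ℝ (Fin d) × ℝ, ∫⁻ x in ball (0 : YY k) (3/4), G (e.symm (jm θ q.1 x), q.2 - ψ x)
      = ∫⁻ x in ball (0 : YY k) (3/4), ∫⁻ q : EuclideanSpace ℝ (Fin d) × ℝ, G (e.symm (jm θ q.1 x), q.2 - ψ x) :=
        lintegral_lintegral_swap hm.aemeasurable
    _ = ∫⁻ x in ball (0 : YY k) (3/4), φ x.1 := by
        refine lintegral_congr fun x => ?_
        have cj' : Continuous (fun q : EuclideanSpace ℝ (Fin d) × ℝ => jm θ q.1 x) := by unfold jm; fun_prop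
        have hm2 : Measurable (fun q : EuclideanSpace ℝ (Fin d) × ℝ => G (e.symm (jm θ q.1 x), q.2 - ψ x)) :=
          hG.comp (Continuous.measurable (by fun_prop))
        rw [Measure.volume_eq_prod, lintegral_prod _ hm2.aemeasurable]
        have : ∀ y, ∫⁻ t, G (e.symm (jm θ y x), t - ψ x) = h (jm θ y x) := fun y =>
          lintegral_sub_right_eq_self (fun t => G (e.symm (jm θ y x), t)) (ψ x)
        simp only [this]
        exact lintegral_add_left_eq_self (fun a => h ((4:ℝ) • x.1, a)) ((10 + 4 * x.2) • θ)
    _ ≤ ∫⁻ x : YY k, φ x.1 * (Icc (-1:ℝ) 1).indicator 1 x.2 := by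
        rw [← lintegral_indicator measurableSet_ball]
        refine lintegral_mono fun x => ?_
        by_cases hx : x ∈ ball (0 : YY k) (3/4)
        · have h2 : |x.2| < 3/4 := (norm_snd_le x).trans_lt (by simpa using hx)
          rw [abs_lt] at h2
          have : x.2 ∈ Icc (-1:ℝ) 1 := ⟨by linarith, by linarith⟩
          simp [hx, this]
        · simp [hx]
    _ = (∫⁻ c, φ c) * 2 := by
        rw [Measure.volume_eq_prod, lintegral_prod_mul hφm.aemeasurable (measurable_one.indicator measurableSet_Icc).aemeasurable]
        congr 1
        rw [lintegral_indicator_one measurableSet_Icc, Real.volume_Icc]; norm_num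
    _ = (∫⁻ w : WW k d, h ((4:ℝ) • w.1, w.2)) * 2 := by
        rw [Measure.volume_eq_prod, lintegral_prod _ hpm.aemeasurable]
    _ = (c * ∫⁻ x, ∫⁻ τ, G (x, τ)) * 2 := by
        rw [← hce (fun x => ∫⁻ τ, G (x, τ))]
        rfl
    _ = _ := by
        rw [Measure.volume_eq_prod, lintegral_prod _ hG.aemeasurable]; ring

theorem lower {n k d ν : ℕ} (hd : 1 ≤ d) {p : ℝ} (hp : 1 < p) {e : EuclideanSpace ℝ (Fin n) ≃L[ℝ] WW k d} (hE : ∀ x, ‖e x‖ ≤ 15 → ‖x‖ < 1)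
    {N : Set (EuclideanSpace ℝ (Fin ν))} (hNcpt : IsCompact N) (hNsub : IsSmoothSubmanifold N)
    {b : EuclideanSpace ℝ (Fin ν)} (hb : b ∈ N) :
    ∃ C : ℝ≥0∞, C ≠ ⊤ ∧ ∀ (f : YY k → EuclideanSpace ℝ (Fin ν)) (hf : IsLoop N b f)
    (u : EuclideanSpace ℝ (Fin n) → EuclideanSpace ℝ (Fin ν)) (_ : ∀ x, 6 ≤ ‖(e x).2‖ → u x = f (qm k d (e x)))
    (U : EuclideanSpace ℝ (Fin n) × ℝ → EuclideanSpace ℝ (Fin ν))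
    (_ : C1OnNhd U (closedBall 0 1 ×ˢ Icc (0 : ℝ) 1)) (_ : MapsTo U (closedBall 0 1 ×ˢ Icc (0 : ℝ) 1) N)
    (_ : ∀ x ∈ closedBall (0 : EuclideanSpace ℝ (Fin n)) 1, U (x, 0) = u x),
    ∃ (g : YY k → EuclideanSpace ℝ (Fin ν)) (hg : IsLoop N b g), ContDiff ℝ (⊤ : ℕ∞) g ∧ cls hb hg = cls hb hf ∧
      Kp p g ≤ C * ((∫⁻ z in ball (0 : EuclideanSpace ℝ (Fin n)) 1 ×ˢ Ioo (0 : ℝ) 1, ENNReal.ofReal (‖fderiv ℝ U z‖ ^ p)) + 1) := by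
  let θ : EuclideanSpace ℝ (Fin d) := EuclideanSpace.single ⟨0, hd⟩ 1
  have hθ : ‖θ‖ = 1 := by simp [θ]
  obtain ⟨Cs, hCs, hsm⟩ := smoothing (k := k) hNcpt hNsub hb hp.le
  obtain ⟨Ca, hCa, havg⟩ := slice_avg (k := k) e θ
  obtain ⟨L, hL⟩ := th1_lip
  let β : ContDiffBump (0 : YY k) := ⟨1/2, 5/8, by norm_num, by norm_num⟩
  obtain ⟨Lβ, hLβ⟩ := ContDiff.lipschitzWith_of_hasCompactSupport (𝕂 := ℝ) β.hasCompactSupport (β.contDiff (n := (⊤ : ℕ∞))) (by simp)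
  set ψ : YY k → ℝ := fun x => 1 - β x with hψ
  have hψs : ContDiff ℝ (⊤ : ℕ∞) ψ := contDiff_const.sub β.contDiff
  have hψ0 : ∀ x, 0 ≤ ψ x := fun x => sub_nonneg.2 β.le_one
  have hψh : ∀ x, ‖x‖ ≤ 1/2 → ψ x = 0 := fun x hx => by
    simp only [hψ]
    rw [β.one_of_mem_closedBall (by simpa [β] using hx)]; simp
  have hψ1 : ∀ x, 5/8 ≤ ‖x‖ → ψ x = 1 := fun x hx => by
    simp only [hψ]
    rw [β.zero_of_le_dist (by simpa [β] using hx)]; simp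
  have hψL : LipschitzWith Lβ ψ := by
    refine LipschitzWith.of_dist_le_mul fun x y => ?_
    have := hLβ.dist_le_mul x y
    rwa [dist_sub_left]
  set K : ℝ≥0 := max (‖(e.symm : WW k d →L[ℝ] EuclideanSpace ℝ (Fin n))‖₊ * 4) (L * Lβ) with hKdef
  let S : Set (EuclideanSpace ℝ (Fin d) × ℝ) := ball 0 1 ×ˢ Ioo (1/2) 1
  have hSo : IsOpen S := isOpen_ball.prod isOpen_Ioo
  have hvS : volume S = volume (ball (0 : EuclideanSpace ℝ (Fin d)) 1) * ENNReal.ofReal (1/2) := by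
    rw [Measure.volume_eq_prod, Measure.prod_prod, Real.volume_Ioo]; norm_num
  have hvB : volume (ball (0 : EuclideanSpace ℝ (Fin d)) 1) ≠ ⊤ := measure_ball_lt_top.ne
  have hS0 : volume S ≠ 0 := (hSo.measure_pos _ ⟨(0, 3/4), by simp [S]; norm_num⟩).ne'
  have hSt : volume S ≠ ⊤ := by rw [hvS]; exact ENNReal.mul_ne_top hvB ENNReal.ofReal_ne_top
  set vB := volume (ball (0 : EuclideanSpace ℝ (Fin d)) 1) with hvBdef
  refine ⟨Cs * ((K : ℝ≥0∞) ^ p * ((volume S)⁻¹ * (Ca + vB)) + 1), ?_, ?_⟩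
  · have : (K : ℝ≥0∞) ^ p ≠ ⊤ := ENNReal.rpow_ne_top_of_nonneg (by linarith) ENNReal.coe_ne_top
    have : (volume S)⁻¹ ≠ ⊤ := ENNReal.inv_ne_top.2 hS0
    finiteness
  intro f hf u hu U hU1 hUN hU0
  set En := ∫⁻ z in ball (0 : EuclideanSpace ℝ (Fin n)) 1 ×ˢ Ioo (0 : ℝ) 1, ENNReal.ofReal (‖fderiv ℝ U z‖ ^ p) with hEn
  obtain ⟨M, hM⟩ : ∃ M : ℝ, ∀ z ∈ closedBall (0 : EuclideanSpace ℝ (Fin n)) 1 ×ˢ Icc (0 : ℝ) 1, ‖fderiv ℝ U z‖ ≤ M := by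
    obtain ⟨V, hV, hsub, hVU⟩ := hU1
    exact ((isCompact_closedBall _ _).prod isCompact_Icc).exists_bound_of_continuousOn
      ((hVU.continuousOn_fderiv_of_isOpen hV le_rfl).mono hsub)
  have hM0 : 0 ≤ M := (norm_nonneg _).trans (hM (0, 0) (by simp))
  set v := volume.real (ball (0 : YY k) (3/4)) with hv
  have hv0 : 0 ≤ v := measureReal_nonneg
  have hMp : 0 ≤ M ^ p := by positivity
  set ε := 1 / (M ^ p * v + 1) with hεdef
  have hε : 0 < ε := by positivity
  have hεle : M ^ p * ε * v ≤ 1 := by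
    rw [hεdef, mul_one_div, div_mul_eq_mul_div, div_le_one (by positivity)]; linarith
  have hvol : volume (ball (0 : YY k) (3/4)) = ENNReal.ofReal v := by
    rw [hv, ofReal_measureReal measure_ball_lt_top.ne]
  clear_value ε
  have hK : ∀ y t, LipschitzWith K (fun x : YY k => (e.symm (jm θ y x), the ε (t - ψ x))) := by
    intro y t
    have l1 : LipschitzWith (‖(e.symm : WW k d →L[ℝ] EuclideanSpace ℝ (Fin n))‖₊ * 4) (fun x : YY k => e.symm (jm θ y x)) :=
      (e.symm : WW k d →L[ℝ] EuclideanSpace ℝ (Fin n)).lipschitz.comp (jm_lip hθ)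
    have l2 : LipschitzWith (L * Lβ) (fun x : YY k => the ε (t - ψ x)) := by
      refine (the_lip hL hε).comp (g := fun x => t - ψ x) ?_
      refine LipschitzWith.of_dist_le_mul fun x y => ?_
      have := hψL.dist_le_mul x y
      rwa [dist_sub_left]
    exact l1.prodMk l2
  set G : EuclideanSpace ℝ (Fin n) × ℝ → ℝ≥0∞ := (ball (0 : EuclideanSpace ℝ (Fin n)) 1 ×ˢ Ioo (0 : ℝ) 1).indicator
    (fun z => ENNReal.ofReal (‖fderiv ℝ U z‖ ^ p)) with hG
  have hmset : MeasurableSet (ball (0 : EuclideanSpace ℝ (Fin n)) 1 ×ˢ Ioo (0 : ℝ) 1) := measurableSet_ball.prod measurableSet_Ioo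
  have hGm : Measurable G := by
    refine Measurable.indicator ?_ hmset
    exact ((measurable_fderiv ℝ U).norm.pow_const p).ennreal_ofReal
  have hGi : ∫⁻ z, G z = En := lintegral_indicator hmset _
  set R : ℝ → ℝ≥0∞ := (Ico 0 ε).indicator (fun _ => ENNReal.ofReal (M ^ p)) with hR
  have hRm : Measurable R := measurable_const.indicator measurableSet_Ico
  have hRi : ∫⁻ s, R s = ENNReal.ofReal (M ^ p * ε) := by
    rw [hR, lintegral_indicator_const measurableSet_Ico, Real.volume_Ico, sub_zero, ENNReal.ofReal_mul hMp]
  set I : EuclideanSpace ℝ (Fin d) × ℝ → ℝ≥0∞ := fun q => ∫⁻ x in ball (0 : YY k) (3/4), (G (e.symm (jm θ q.1 x), q.2 - ψ x) + R (q.2 - ψ x)) with hI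
  have hψc : Continuous ψ := hψs.continuous
  have cj : Continuous (fun r : (EuclideanSpace ℝ (Fin d) × ℝ) × YY k => jm θ r.1.1 r.2) := by unfold jm; fun_prop
  have hm1 : Measurable (fun r : (EuclideanSpace ℝ (Fin d) × ℝ) × YY k => G (e.symm (jm θ r.1.1 r.2), r.1.2 - ψ r.2)) :=
    hGm.comp (Continuous.measurable (by fun_prop))
  have hm2 : Measurable (fun r : (EuclideanSpace ℝ (Fin d) × ℝ) × YY k => R (r.1.2 - ψ r.2)) :=
    hRm.comp (Continuous.measurable (by fun_prop))
  have hI1m : Measurable (fun q : EuclideanSpace ℝ (Fin d) × ℝ => ∫⁻ x in ball (0 : YY k) (3/4), G (e.symm (jm θ q.1 x), q.2 - ψ x)) :=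
    hm1.lintegral_prod_right'
  have hIm : Measurable I := (hm1.add hm2).lintegral_prod_right'
  have hIle : ∫⁻ q in S, I q ≤ Ca * En + vB := by
    have hsplit : ∀ q, I q = (∫⁻ x in ball (0 : YY k) (3/4), G (e.symm (jm θ q.1 x), q.2 - ψ x)) + ∫⁻ x in ball (0 : YY k) (3/4), R (q.2 - ψ x) := by
      intro q
      exact lintegral_add_left (hm1.comp (measurable_const.prodMk measurable_id)) _
    simp only [hsplit]
    rw [lintegral_add_left hI1m]
    refine add_le_add ?_ ?_
    · refine (setLIntegral_le_lintegral _ _).trans ((havg ψ hψc G hGm).trans ?_)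
      rw [hGi]
    · have hm3 : Measurable (fun r : ℝ × YY k => R (r.1 - ψ r.2)) := hRm.comp (Continuous.measurable (by fun_prop))
      have hm4 : Measurable (fun t : ℝ => ∫⁻ x in ball (0 : YY k) (3/4), R (t - ψ x)) := hm3.lintegral_prod_right'
      calc ∫⁻ q in S, ∫⁻ x in ball (0 : YY k) (3/4), R (q.2 - ψ x)
          = ∫⁻ y in ball (0 : EuclideanSpace ℝ (Fin d)) 1, ∫⁻ t in Ioo (1/2:ℝ) 1, ∫⁻ x in ball (0 : YY k) (3/4), R (t - ψ x) := by
            rw [Measure.volume_eq_prod, ← Measure.prod_restrict, lintegral_prod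
              (fun q : EuclideanSpace ℝ (Fin d) × ℝ => ∫⁻ x in ball (0 : YY k) (3/4), R (q.2 - ψ x)) (hm4.comp measurable_snd).aemeasurable]
        _ ≤ ∫⁻ y in ball (0 : EuclideanSpace ℝ (Fin d)) 1, 1 := by
            refine lintegral_mono fun y => ?_
            calc ∫⁻ t in Ioo (1/2:ℝ) 1, ∫⁻ x in ball (0 : YY k) (3/4), R (t - ψ x)
                ≤ ∫⁻ t, ∫⁻ x in ball (0 : YY k) (3/4), R (t - ψ x) := setLIntegral_le_lintegral _ _
              _ = ∫⁻ x in ball (0 : YY k) (3/4), ∫⁻ t, R (t - ψ x) := lintegral_lintegral_swap hm3.aemeasurable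
              _ = ∫⁻ x in ball (0 : YY k) (3/4), ENNReal.ofReal (M ^ p * ε) := by
                  refine lintegral_congr fun x => ?_
                  rw [lintegral_sub_right_eq_self R (ψ x), hRi]
              _ = ENNReal.ofReal (M ^ p * ε * v) := by
                  rw [setLIntegral_const, hvol, ENNReal.ofReal_mul (p := M ^ p * ε) (by positivity)]
              _ ≤ 1 := by rw [← ENNReal.ofReal_one]; exact ENNReal.ofReal_le_ofReal hεle
        _ = vB := by simp [hvBdef]
  obtain ⟨⟨y, t⟩, ⟨hy, ht⟩, hqI⟩ := exists_le_setLAverage hS0 hSt hIm.aemeasurable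
  have hy' : ‖y‖ ≤ 1 := le_of_lt (by simpa using hy)
  have ht' : t ∈ Ioo (1/2:ℝ) 1 := ht
  obtain ⟨w, hw, hwo, hw1, hwcls, hwd⟩ := slice_map hE hb hθ hy' hf hu hU1 hUN hU0 hψs hψ0 hψh hψ1 ht' hε (hK y t)
  obtain ⟨g, hg, hgs, hgc, hgK⟩ := hsm w hw hwo
  refine ⟨g, hg, hgs, hgc.trans hwcls, (hgK hw1).trans ?_⟩
  have hKw : Kp p w ≤ (K : ℝ≥0∞) ^ p * I (y, t) := by
    rw [Kp, hI]
    simp only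
    rw [← lintegral_indicator measurableSet_ball, ← lintegral_const_mul' _ _ (ENNReal.rpow_ne_top_of_nonneg (by linarith) ENNReal.coe_ne_top)]
    refine lintegral_mono fun x => ?_
    rcases hwd x with h0 | ⟨hx, hxt, hle⟩
    · rw [h0]; simp [Real.zero_rpow (by linarith : p ≠ 0)]
    · rw [indicator_of_mem (by simpa using hx)]
      have hxb : ‖e.symm (jm θ y x)‖ < 1 := hE _ (by simpa using (jm_bounds hθ hy' hx).1)
      have step : ENNReal.ofReal (‖fderiv ℝ w x‖ ^ p) ≤ (K : ℝ≥0∞) ^ p * ENNReal.ofReal (‖fderiv ℝ U (e.symm (jm θ y x), the ε (t - ψ x))‖ ^ p) := by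
        have : ((K : ℝ≥0∞)) ^ p = ENNReal.ofReal ((K : ℝ) ^ p) := by
          rw [← ENNReal.ofReal_rpow_of_nonneg (NNReal.coe_nonneg K) (by linarith), ENNReal.ofReal_coe_nnreal]
        rw [this, ← ENNReal.ofReal_mul (by positivity), ← Real.mul_rpow (NNReal.coe_nonneg K) (norm_nonneg _)]
        refine ENNReal.ofReal_le_ofReal (Real.rpow_le_rpow (norm_nonneg _) ?_ (by linarith))
        rw [mul_comm]; exact hle
      refine step.trans ?_
      gcongr
      rcases lt_or_ge (t - ψ x) ε with hs | hs
      · have hmem : t - ψ x ∈ Ico 0 ε := ⟨by linarith, hs⟩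
        have : R (t - ψ x) = ENNReal.ofReal (M ^ p) := by rw [hR, indicator_of_mem hmem]
        rw [this]
        refine le_trans ?_ le_add_self
        refine ENNReal.ofReal_le_ofReal (Real.rpow_le_rpow (norm_nonneg _) (hM _ ⟨?_, ?_⟩) (by linarith))
        · simpa using hxb.le
        · exact the_mem hε (by linarith [ht'.2, hψ0 x])
      · rw [the_of_ge hε hs]
        refine le_trans ?_ le_self_add
        rw [hG, indicator_of_mem]
        refine ⟨by simpa using hxb, ?_, ?_⟩
        · change 0 < t - ψ x
          linarith
        · change t - ψ x < 1
          linarith [ht'.2, hψ0 x]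
  have hIy : I (y, t) ≤ (volume S)⁻¹ * (Ca * En + vB) := by
    refine hqI.trans ?_
    rw [setLAverage_eq, ENNReal.div_eq_inv_mul]
    gcongr
  calc Cs * (Kp p w + 1) ≤ Cs * ((K : ℝ≥0∞) ^ p * ((volume S)⁻¹ * (Ca * En + vB)) + 1) := by
        gcongr
        exact hKw.trans (by gcongr)
    _ ≤ Cs * ((K : ℝ≥0∞) ^ p * ((volume S)⁻¹ * (Ca * En + vB)) + 1) +
        Cs * ((K : ℝ≥0∞) ^ p * ((volume S)⁻¹ * (Ca + vB * En)) + En) := le_self_add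
    _ = _ := by ring

end

section
open Metric Set MeasureTheory Filter
open scoped ENNReal Topology

theorem final_arith {p : ℝ} (hp : 1 < p) {c c' M : ℝ} (hc : 1 ≤ c) (hc' : 0 ≤ c') (hM : 0 < M) :
    ∃ J : ℕ, ∀ x en : ℝ, (J : ℝ) ≤ x → 0 ≤ en → x ≤ c * (en + 1) + 1 → M * (c' * (1 + x) ^ (1 - 1/p)) ≤ en := by
  set R := 2 * M * c' * c + 1 with hR
  have hR0 : 0 < R := by positivity
  obtain ⟨J, hJ⟩ := exists_nat_ge (max (R ^ p) (3 + 2 * c))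
  refine ⟨J, fun x en hx hen hle => ?_⟩
  have h1 : R ^ p ≤ x := (le_max_left _ _).trans (hJ.trans hx)
  have h2 : 3 + 2 * c ≤ x := (le_max_right _ _).trans (hJ.trans hx)
  have hx0 : 0 < 1 + x := by linarith
  have h3 : R ≤ (1 + x) ^ (1/p) := by
    have : (R ^ p) ^ (1/p) = R := by rw [← Real.rpow_mul hR0.le]; field_simp; simp
    rw [← this]
    exact Real.rpow_le_rpow (by positivity) (by linarith) (by positivity)
  have h4 : (1 + x) ^ (1 - 1/p) * (1 + x) ^ (1/p) = 1 + x := by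
    rw [← Real.rpow_add hx0]; simp
  set A := (1 + x) ^ (1 - 1/p) with hA
  have hA0 : 0 ≤ A := by positivity
  have h5 : A * R ≤ 1 + x := by rw [← h4]; gcongr
  have h6 : 2 * c * (M * (c' * A)) ≤ 1 + x := by
    refine le_trans ?_ h5
    rw [hR]; nlinarith
  have h7 : 1 + x ≤ 2 * c * en := by nlinarith
  have : 2 * c * (M * (c' * A)) ≤ 2 * c * en := h6.trans h7
  exact le_of_mul_le_mul_left this (by linarith)

theorem exists_reps {ν k : ℕ} {N : Set (EuclideanSpace ℝ (Fin ν))} (hNcpt : IsCompact N) (hNsub : IsSmoothSubmanifold N)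
    {b : EuclideanSpace ℝ (Fin ν)} (hb : b ∈ N) {p : ℝ} (hp : (k:ℝ) + 1 < p)
    (hπ : Infinite (HomotopyGroup (Fin (k+1)) ↥N ⟨b, hb⟩)) (j : ℕ) :
    ∃ (f : YY k → EuclideanSpace ℝ (Fin ν)) (hf : IsLoop N b f), ContDiff ℝ (⊤ : ℕ∞) f ∧ (j : ℝ≥0∞) < Kp p f ∧
      ∀ (g : YY k → EuclideanSpace ℝ (Fin ν)) (hg : IsLoop N b g), ContDiff ℝ (⊤ : ℕ∞) g → cls hb hg = cls hb hf → Kp p f ≤ Kp p g + 1 := by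
  have hp0 : 1 < p := by have : (0:ℝ) ≤ k := Nat.cast_nonneg k; linarith
  obtain ⟨α, hα⟩ := (finite_classes hNcpt hNsub hb hp (ENNReal.natCast_ne_top j)).exists_notMem
  obtain ⟨C, -, hsm⟩ := smoothing (k := k) hNcpt hNsub hb hp0.le
  obtain ⟨f0, hf0, h12, hcl⟩ := cls_surj hb α
  obtain ⟨g0, hg0, hg0s, hg0c, -⟩ := hsm f0 hf0 (fun x hx => h12 x (by linarith))
  let T : Set ℝ≥0∞ := {a | ∃ (g : YY k → EuclideanSpace ℝ (Fin ν)) (hg : IsLoop N b g), ContDiff ℝ (⊤ : ℕ∞) g ∧ cls hb hg = α ∧ a = Kp p g}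
  have hT : sInf T < sInf T + 1 := by
    refine ENNReal.lt_add_right ?_ one_ne_zero
    exact ne_top_of_le_ne_top (Kp_finite hg0 hg0s (by linarith)) (sInf_le ⟨g0, hg0, hg0s, hg0c.trans hcl, rfl⟩)
  obtain ⟨a, ⟨f, hf, hfs, hfc, rfl⟩, ha⟩ := sInf_lt_iff.1 hT
  refine ⟨f, hf, hfs, ?_, ?_⟩
  · by_contra hcon
    exact hα ⟨f, hf, hfs.of_le (by exact_mod_cast le_top), hfc, not_lt.1 hcon⟩
  · intro g hg hgs hgc
    refine ha.le.trans ?_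
    gcongr
    exact sInf_le ⟨g, hg, hgs, hgc.trans hfc, rfl⟩

theorem main_aux (ν : ℕ) (N : Set (EuclideanSpace ℝ (Fin ν)))
    (hNcpt : IsCompact N) (hNsub : IsSmoothSubmanifold N)
    (b : EuclideanSpace ℝ (Fin ν)) (hb : b ∈ N)
    (n : ℕ) (p : ℝ) (k d : ℕ) (hd : 1 ≤ d) (hn : n = k + d)
    (hlp : (k : ℝ) + 1 < p)
    (hπ : Infinite (HomotopyGroup (Fin (k+1)) ↥N ⟨b, hb⟩)) :
    ∃ u : ℕ → EuclideanSpace ℝ (Fin n) → EuclideanSpace ℝ (Fin ν),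
      (∀ j, SmoothOnNhd (u j) (closedBall 0 1)) ∧
      (∀ j, MapsTo (u j) (closedBall 0 1) N) ∧
      (∀ j, ∀ x ∈ sphere (0 : EuclideanSpace ℝ (Fin n)) 1, u j x = b) ∧
      0 < Filter.atTop.liminf (fun j => gagliardoE (1 - 1 / p) p (ball 0 1) (u j)) ∧
      (∀ M : ℝ, 0 < M → ∃ J : ℕ, ∀ j, J ≤ j →
        ENNReal.ofReal M * gagliardoE (1 - 1 / p) p (ball 0 1) (u j)
          ≤ extEnergy p N (u j)) := by
  have hp : 1 < p := by have : (0:ℝ) ≤ k := Nat.cast_nonneg k; linarith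
  have hp1 : 0 ≤ 1 - 1/p := by
    rw [sub_nonneg, div_le_one (by linarith)]; exact hp.le
  obtain ⟨e, hE⟩ := exists_e hn
  choose f hf hfs hfj hfmin using exists_reps hNcpt hNsub hb hlp hπ
  obtain ⟨z0, hz0⟩ : ∃ z0, f 0 z0 ≠ b := by
    by_contra hcon
    push Not at hcon
    have h0 : f 0 = fun _ => b := funext hcon
    have := hfj 0
    rw [h0] at this
    simp [Kp, Real.zero_rpow (by linarith : p ≠ 0)] at this
  obtain ⟨c, hc, hlim⟩ := uu_liminf hd hp (by omega) e hE (hf 0) (hfs 0) hz0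
  obtain ⟨C', hC', hgag⟩ := uu_gag hd hp (by omega) e hNcpt (hf 0) (hfs 0)
  obtain ⟨C, hC, hlow⟩ := lower hd hp hE hNcpt hNsub hb
  refine ⟨fun j => uu e b (f j) (f 0), ?_, ?_, ?_, ?_, ?_⟩
  · intro j
    exact ⟨univ, isOpen_univ, subset_univ _, (uu_smooth (hf j) (hf 0) (hfs j) (hfs 0)).contDiffOn⟩
  · intro j x _
    exact uu_mem (hf j) (hf 0) x
  · intro j x hx
    exact uu_out hE (hf j) (hf 0) (by simp at hx; exact hx.ge)
  · refine lt_of_lt_of_le hc (le_liminf_of_le (by isBoundedDefault) (Eventually.of_forall fun j => hlim (hf j)))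
  · intro M hM
    obtain ⟨J, hJ⟩ := final_arith hp (c := C.toReal + 1) (c' := C'.toReal) (by linarith [C.toReal_nonneg]) ENNReal.toReal_nonneg hM
    refine ⟨J, fun j hj => le_sInf ?_⟩
    rintro En ⟨U, hU1, hUN, hU0, hEn⟩
    obtain ⟨g, hg, hgs, hgc, hgK⟩ := hlow (f j) (hf j) _ (fun x hx => uu_far (hf 0) hx) U hU1 hUN hU0
    rw [← hEn] at hgK
    by_cases htop : En = ⊤
    · rw [htop]; exact le_top
    have hX : Kp p (f j) ≠ ⊤ := Kp_finite (hf j) (hfs j) (by linarith)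
    have hXle : Kp p (f j) ≤ C * (En + 1) + 1 := (hfmin j g hg hgs hgc).trans (by gcongr)
    set x := (Kp p (f j)).toReal with hx
    have hxe : Kp p (f j) = ENNReal.ofReal x := (ENNReal.ofReal_toReal hX).symm
    have hx0 : 0 ≤ x := ENNReal.toReal_nonneg
    have hJx : (J : ℝ) ≤ x := by
      have h1 : (j : ℝ≥0∞) ≤ Kp p (f j) := (hfj j).le
      have h2 := ENNReal.toReal_mono hX h1
      rw [ENNReal.toReal_natCast] at h2
      exact le_trans (by exact_mod_cast hj) h2
    have hxle : x ≤ (C.toReal + 1) * (En.toReal + 1) + 1 := by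
      have h2 := ENNReal.toReal_mono (by finiteness) hXle
      rw [ENNReal.toReal_add (by finiteness) (by finiteness), ENNReal.toReal_mul, ENNReal.toReal_add htop (by finiteness)] at h2
      simp only [ENNReal.toReal_one] at h2
      have := En.toReal_nonneg
      linarith
    have hfin := hJ x En.toReal hJx ENNReal.toReal_nonneg hxle
    calc ENNReal.ofReal M * gagliardoE (1 - 1 / p) p (ball 0 1) (uu e b (f j) (f 0))
        ≤ ENNReal.ofReal M * (C' * (1 + Kp p (f j)) ^ (1 - 1/p)) := by
          gcongr
          exact hgag (hf j) (hfs j)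
      _ = ENNReal.ofReal (M * (C'.toReal * (1 + x) ^ (1 - 1/p))) := by
          rw [ENNReal.ofReal_mul hM.le, ENNReal.ofReal_mul ENNReal.toReal_nonneg, ENNReal.ofReal_toReal hC', hxe,
            ← ENNReal.ofReal_one, ← ENNReal.ofReal_add zero_le_one hx0, ENNReal.ofReal_rpow_of_nonneg (by linarith) hp1]
      _ ≤ ENNReal.ofReal En.toReal := ENNReal.ofReal_le_ofReal hfin
      _ = En := ENNReal.ofReal_toReal htop

end

open scoped Topology in
/-- if `ℓ < p - 1` and `π_ℓ(N, b)` is infinite, there is a sequence of smooth maps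
`u_j : B̄^{m-1} → N`, equal to `b` on `S^{m-2}`, whose fractional energies stay bounded away
from `0` while the ratio `E^{1,p}_ext(u_j) / E^{1-1/p,p}(u_j)` tends to `∞`. -/
theorem statement0 (ν : ℕ) (hν : 1 ≤ ν) (N : Set (EuclideanSpace ℝ (Fin ν)))
    (hNcpt : IsCompact N) (hNconn : IsConnected N) (hNsub : IsSmoothSubmanifold N)
    (b : EuclideanSpace ℝ (Fin ν)) (hb : b ∈ N)
    (m : ℕ) (hm : 2 ≤ m) (p : ℝ) (l : ℕ) (hl : 1 ≤ l) (hlm : l ≤ m - 1)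
    (hlp : (l : ℝ) < p - 1)
    (hπ : Infinite (HomotopyGroup (Fin l) ↥N ⟨b, hb⟩)) :
    ∃ u : ℕ → EuclideanSpace ℝ (Fin (m - 1)) → EuclideanSpace ℝ (Fin ν),
      (∀ j, SmoothOnNhd (u j) (closedBall 0 1)) ∧
      (∀ j, MapsTo (u j) (closedBall 0 1) N) ∧
      (∀ j, ∀ x ∈ sphere (0 : EuclideanSpace ℝ (Fin (m - 1))) 1, u j x = b) ∧
      0 < Filter.atTop.liminf (fun j => gagliardoE (1 - 1 / p) p (ball 0 1) (u j)) ∧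
      (∀ M : ℝ, 0 < M → ∃ J : ℕ, ∀ j, J ≤ j →
        ENNReal.ofReal M * gagliardoE (1 - 1 / p) p (ball 0 1) (u j)
          ≤ extEnergy p N (u j)) := by
  obtain ⟨k, rfl⟩ : ∃ k, l = k + 1 := ⟨l - 1, by omega⟩
  have hlp' : (k : ℝ) + 1 < p := by push_cast at hlp; linarith
  exact main_aux ν N hNcpt hNsub b hb (m - 1) p k (m - 1 - k) (by omega) (by omega) hlp' hπ

end
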